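/- arXiv:1707.06047 — 9 statements merged into one kernel-verified Lean document; each statement's English description precedes it below -/
import Mathlib

section
/- Let r and s be natural numbers and let t ≥ 2s. Then whenever f = (f_1,…,f_t) is a well-conditioned t-tuple of polynomials with integer coefficients, one has A_{s,r}(X;f) ≪ X^{2rs}, i.e. there is a constant C, depending at most on s, r, t and the coefficients of f, such that A_{s,r}(X;f) ≤ C·X^{2rs} for all sufficiently large real X. -/
open Finset

/-- A `t`-tuple `f = (f_1, …, f_t)` of nonzero integer polynomials is *well-conditioned*
if their degrees satisfy `0 ≤ k_t < k_{t-1} < ⋯ < k_1` and there is no positive integer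
`z` with `f_1(z) = ⋯ = f_t(z) = 0`. -/
def WellConditioned {t : ℕ} (f : Fin t → Polynomial ℤ) : Prop :=
  (∀ j, f j ≠ 0) ∧
  (∀ i j : Fin t, i < j → (f j).natDegree < (f i).natDegree) ∧
  (∀ z : ℤ, 0 < z → ∃ j, (f j).eval z ≠ 0)

/-- `auxCount s r f X` counts integral solutions of `∑_{i=1}^{2s} h_i f_j(z_i) = 0`
(`1 ≤ j ≤ t`) with `|h_i| ≤ X^r` and `1 ≤ z_i ≤ X`. -/
noncomputable def auxCount {t : ℕ} (s r : ℕ) (f : Fin t → Polynomial ℤ) (X : ℝ) : ℕ :=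
  {p : (Fin (2 * s) → ℤ) × (Fin (2 * s) → ℤ) |
      (∀ i, |(p.1 i : ℝ)| ≤ X ^ r) ∧
      (∀ i, 1 ≤ p.2 i ∧ (p.2 i : ℝ) ≤ X) ∧
      ∀ j, ∑ i, p.1 i * (f j).eval (p.2 i) = 0}.ncard

/-!
Given a solution `(h, z)`, choose a set `J` of indices for which the vectors
`(f₁(zᵢ), …, f_t(zᵢ))` with `i ∈ J` form a basis of the span of all `2s` of them, and regard
the `zᵢ` with `i ∈ J` and the `hᵢ` with `i ∉ J` as free. For `i ∉ J` the vector at `zᵢ` lies in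
the span of fewer than `2s ≤ t` vectors, so `zᵢ` is a root of a nonzero linear combination of the
`f_j` depending only on the free variables, which leaves at most `D = max_j deg f_j` choices. The
`hᵢ` with `i ∈ J` are then determined by linear independence. Summing over `J` with the binomial
theorem bounds the number of solutions by `(X + D (2 X ^ r + 1)) ^ (2 s)`.
-/

section LinearRelations

open Module Submodule

/-- The index set `J` picks out a basis of the span of the family `v`. -/
def IndexesBasis (K : Type*) {ι V : Type*} [Field K] [AddCommGroup V] [Module K V]
    (v : ι → V) (J : Finset ι) : Prop :=
  LinearIndepOn K v J ∧ ∀ i, v i ∈ span K (v '' J)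

theorem exists_indexesBasis (K : Type*) {ι V : Type*} [Field K] [AddCommGroup V] [Module K V]
    [Finite ι] (v : ι → V) : ∃ J : Finset ι, IndexesBasis K v J := by
  obtain ⟨b, -, -, hspan, hind⟩ :=
    exists_linearIndepOn_extension (linearIndepOn_empty K v) (Set.empty_subset Set.univ)
  refine ⟨b.toFinite.toFinset, ?_, fun i ↦ ?_⟩ <;> rw [Set.Finite.coe_toFinset]
  exacts [hind, hspan (Set.mem_image_of_mem v (Set.mem_univ i))]

theorem eq_of_sum_smul_eq_of_eqOn_compl {R ι V : Type*} [Ring R] [AddCommGroup V] [Module R V]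
    [Fintype ι] {v : ι → V} {J : Finset ι} (hv : LinearIndepOn R v J) {g h : ι → R}
    (hsum : ∑ i, g i • v i = ∑ i, h i • v i) (hgh : ∀ i ∉ J, g i = h i) : g = h := by
  have hsumJ : ∑ i ∈ J, (g i - h i) • v i = 0 := by
    rw [sum_subset J.subset_univ fun i _ hi ↦ by rw [hgh i hi, sub_self, zero_smul]]
    simp only [sub_smul, sum_sub_distrib, hsum, sub_self]
  funext i
  by_cases hi : i ∈ J
  · exact sub_eq_zero.mp (linearIndepOn_finset_iff.mp hv _ hsumJ i hi)
  · exact hgh i hi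

theorem card_filter_sum_smul_eq_le {R ι V : Type*} [Ring R] [AddCommGroup V] [Module R V]
    [Fintype ι] [DecidableEq ι] [DecidableEq V] {v : ι → V} {J : Finset ι}
    (hv : LinearIndepOn R v J) (H : Finset R) (w : V) :
    #{h ∈ Fintype.piFinset fun _ : ι ↦ H | ∑ i, h i • v i = w} ≤ #H ^ #Jᶜ := by
  calc
    _ ≤ #(Fintype.piFinset fun _ : ↥Jᶜ ↦ H) := by
      refine card_le_card_of_injOn Jᶜ.restrict ?_ ?_
      · intro h hh
        simp only [coe_filter, Fintype.mem_piFinset, Set.mem_ofPred_eq] at hh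
        exact Fintype.mem_piFinset.mpr fun i ↦ hh.1 i
      · intro g hg h hh hgh
        simp only [coe_filter, Set.mem_ofPred_eq] at hg hh
        exact eq_of_sum_smul_eq_of_eqOn_compl hv (hg.2.trans hh.2.symm) fun i hi ↦
          congrFun hgh ⟨i, mem_compl.mpr hi⟩
    _ = #H ^ #Jᶜ := by simp

variable {K V α ι : Type*} [Field K] [AddCommGroup V] [Module K V] [Fintype ι] [DecidableEq ι]
  {v : α → V} {Z : Finset α} {D : ℕ}

open Classical in
theorem card_filter_forall_mem_span_le (hι : Fintype.card ι ≤ finrank K V)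
    (hD : ∀ W : Submodule K V, W ≠ ⊤ → #{a ∈ Z | v a ∈ W} ≤ D) (J : Finset ι) :
    #{z ∈ Fintype.piFinset fun _ : ι ↦ Z | ∀ i, v (z i) ∈ span K ((v ∘ z) '' J)} ≤
      D ^ #Jᶜ * #Z ^ #J := by
  have hcard : #(Fintype.piFinset fun _ : J ↦ Z) = #Z ^ #J := by simp
  rw [← hcard]
  refine card_le_mul_card_image_of_maps_to (f := J.restrict) ?_ _ fun g _ ↦ ?_
  · intro z hz
    exact Fintype.mem_piFinset.mpr fun i ↦ Fintype.mem_piFinset.mp (mem_filter.mp hz).1 i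
  let W : Submodule K V := span K (Set.range (v ∘ g))
  have hW : ∀ i ∈ Jᶜ, W ≠ ⊤ := fun i hi hW ↦ by
    have hlt : #J < Fintype.card ι := card_lt_univ_of_notMem (mem_compl.mp hi)
    have hle : finrank K W ≤ #J := by simpa using! finrank_range_le_card (R := K) (v ∘ g)
    rw [hW, finrank_top] at hle
    omega
  calc
    _ ≤ #(Fintype.piFinset fun _ : ↥Jᶜ ↦ {a ∈ Z | v a ∈ W}) := by
      refine card_le_card_of_injOn Jᶜ.restrict ?_ ?_
      · intro z hz
        simp only [coe_filter, mem_filter, Fintype.mem_piFinset, Set.mem_ofPred_eq] at hz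
        obtain ⟨⟨hzZ, hspan⟩, rfl⟩ := hz
        rw [Set.image_eq_range] at hspan
        exact Fintype.mem_piFinset.mpr fun i ↦ mem_filter.mpr ⟨hzZ i, hspan i⟩
      · intro y hy z hz hyz
        simp only [coe_filter, Set.mem_ofPred_eq] at hy hz
        funext i
        by_cases hi : i ∈ J
        · exact congrFun (hy.2.trans hz.2.symm) ⟨i, hi⟩
        · exact congrFun hyz ⟨i, mem_compl.mpr hi⟩
    _ = ∏ _i : ↥Jᶜ, #{a ∈ Z | v a ∈ W} := Fintype.card_piFinset _
    _ ≤ ∏ _i : ↥Jᶜ, D := prod_le_prod' fun i _ ↦ hD W (hW i i.2)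
    _ = D ^ #Jᶜ := by simp

open Classical in
theorem card_filter_indexesBasis_sum_smul_eq_le (hι : Fintype.card ι ≤ finrank K V)
    (hD : ∀ W : Submodule K V, W ≠ ⊤ → #{a ∈ Z | v a ∈ W} ≤ D) (H : Finset K) (w : V)
    (J : Finset ι) :
    #{p ∈ (Fintype.piFinset fun _ : ι ↦ H) ×ˢ (Fintype.piFinset fun _ : ι ↦ Z) |
      ∑ i, p.1 i • v (p.2 i) = w ∧ IndexesBasis K (v ∘ p.2) J} ≤
      #Z ^ #J * (D * #H) ^ #Jᶜ := by
  calc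
    _ ≤ #H ^ #Jᶜ *
        #{z ∈ Fintype.piFinset fun _ : ι ↦ Z | ∀ i, v (z i) ∈ span K ((v ∘ z) '' J)} := by
      refine card_le_mul_card_image_of_maps_to (f := Prod.snd) ?_ _ fun z _ ↦ ?_
      · intro p hp
        simp only [mem_filter, mem_product] at hp ⊢
        exact ⟨hp.1.2, hp.2.2.2⟩
      · by_cases hz : LinearIndepOn K (v ∘ z) J
        · refine (card_le_card_of_injOn Prod.fst ?_ ?_).trans
            (card_filter_sum_smul_eq_le hz H w)
          · rintro ⟨h, _⟩ hp
            simp only [coe_filter, mem_filter, mem_product, Set.mem_ofPred_eq] at hp ⊢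
            obtain ⟨⟨⟨hh, -⟩, hsum, -⟩, rfl⟩ := hp
            exact ⟨hh, hsum⟩
          · intro p hp q hq hpq
            simp only [coe_filter, Set.mem_ofPred_eq] at hp hq
            exact Prod.ext hpq (hp.2.trans hq.2.symm)
        · refine (card_eq_zero.mpr (filter_eq_empty_iff.mpr ?_)).trans_le (Nat.zero_le _)
          rintro p hp rfl
          exact hz (mem_filter.mp hp).2.2.1
    _ ≤ #H ^ #Jᶜ * (D ^ #Jᶜ * #Z ^ #J) := by
      gcongr
      exact card_filter_forall_mem_span_le hι hD J
    _ = #Z ^ #J * (D * #H) ^ #Jᶜ := by ring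

open Classical in
theorem card_filter_sum_smul_apply_eq_le (hι : Fintype.card ι ≤ finrank K V)
    (hD : ∀ W : Submodule K V, W ≠ ⊤ → #{a ∈ Z | v a ∈ W} ≤ D) (H : Finset K) (w : V) :
    #{p ∈ (Fintype.piFinset fun _ : ι ↦ H) ×ˢ (Fintype.piFinset fun _ : ι ↦ Z) |
      ∑ i, p.1 i • v (p.2 i) = w} ≤ (#Z + D * #H) ^ Fintype.card ι := by
  set B := (Fintype.piFinset fun _ : ι ↦ H) ×ˢ (Fintype.piFinset fun _ : ι ↦ Z)
  calc
    _ ≤ #(univ.biUnion fun J : Finset ι ↦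
        {p ∈ B | ∑ i, p.1 i • v (p.2 i) = w ∧ IndexesBasis K (v ∘ p.2) J}) := by
      refine card_le_card fun p hp ↦ ?_
      obtain ⟨J, hJ⟩ := exists_indexesBasis K (v ∘ p.2)
      obtain ⟨hpB, hsum⟩ := mem_filter.mp hp
      exact mem_biUnion.mpr ⟨J, mem_univ J, mem_filter.mpr ⟨hpB, hsum, hJ⟩⟩
    _ ≤ ∑ J : Finset ι, #Z ^ #J * (D * #H) ^ #Jᶜ :=
      card_biUnion_le.trans <| sum_le_sum fun J _ ↦
        card_filter_indexesBasis_sum_smul_eq_le hι hD H w J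
    _ = (#Z + D * #H) ^ Fintype.card ι := by
      simp only [card_compl, Fintype.sum_pow_mul_eq_add_pow]

end LinearRelations

section Polynomials

open Polynomial

theorem linearIndependent_of_natDegree_injective {R κ : Type*} [Ring R] [IsDomain R]
    {f : κ → R[X]} (hf : ∀ j, f j ≠ 0) (hdeg : Function.Injective fun j ↦ (f j).natDegree) :
    LinearIndependent R f := by
  rw [linearIndependent_iff']
  intro s c hsum j hj
  have hpair : Set.Pairwise {i | i ∈ s ∧ c i • f i ≠ 0}
      (Function.onFun Ne (degree ∘ fun i ↦ c i • f i)) := by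
    rintro a ⟨-, ha⟩ b ⟨-, hb⟩ hab h
    have hnat : (c a • f a).natDegree = (c b • f b).natDegree := natDegree_eq_of_degree_eq h
    rw [natDegree_smul _ (left_ne_zero_of_smul ha), natDegree_smul _ (left_ne_zero_of_smul hb)]
      at hnat
    exact hab (hdeg hnat)
  have hsup := degree_sum_eq_of_disjoint _ s hpair
  rw [hsum, degree_zero, eq_comm, Finset.sup_eq_bot_iff] at hsup
  exact (smul_eq_zero.mp (degree_eq_bot.mp (hsup j hj))).resolve_right (hf j)

theorem linearIndependent_map_fractionRing {R κ : Type*} (K : Type*) [CommRing R] [Field K]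
    [Algebra R K] [IsFractionRing R K] {f : κ → R[X]} (hf : LinearIndependent R f) :
    LinearIndependent K fun j ↦ (f j).map (algebraMap R K) := by
  rw [← LinearIndependent.iff_fractionRing R K]
  exact hf.map_injOn (mapAlg R K).toLinearMap
    (map_injective _ (IsFractionRing.injective R K)).injOn

variable {K κ : Type*} [Field K] {f : κ → K[X]} {D : ℕ}

open Classical in
theorem card_filter_eval_mem_le [Finite κ] (hf : LinearIndependent K f)
    (hD : ∀ j, (f j).natDegree ≤ D) (Z : Finset K) {W : Submodule K (κ → K)} (hW : W ≠ ⊤) :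
    #{a ∈ Z | (fun j ↦ (f j).eval a) ∈ W} ≤ D := by
  have := Fintype.ofFinite κ
  obtain ⟨φ, hφ, hWφ⟩ := W.exists_le_ker_of_lt_top hW.lt_top
  let P : K[X] := ∑ j, φ (Pi.single j 1) • f j
  have heval (a : K) : P.eval a = φ fun j ↦ (f j).eval a := by
    conv_rhs => rw [pi_eq_sum_univ' fun j ↦ (f j).eval a]
    simp [P, eval_finsetSum, mul_comm]
  have hP : P ≠ 0 := fun hP ↦ hφ <| LinearMap.pi_ext' fun j ↦ LinearMap.ext_ring <| by
    simpa using Fintype.linearIndependent_iff.mp hf _ hP j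
  calc
    _ ≤ P.natDegree := card_le_degree_of_subset_roots fun a ha ↦
      (mem_roots hP).mpr <| (heval a).trans <| hWφ (mem_filter.mp ha).2
    _ ≤ D := natDegree_sum_le_of_forall_le _ _ fun j _ ↦ (natDegree_smul_le _ _).trans (hD j)

open Classical in
theorem card_filter_sum_mul_eval_eq_le {ι : Type*} [Fintype ι] [DecidableEq ι]
    [Fintype κ] (hικ : Fintype.card ι ≤ Fintype.card κ) (hf : LinearIndependent K f)
    (hD : ∀ j, (f j).natDegree ≤ D) (H Z : Finset K) (w : κ → K) :
    #{p ∈ (Fintype.piFinset fun _ : ι ↦ H) ×ˢ (Fintype.piFinset fun _ : ι ↦ Z) |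
      ∀ j, ∑ i, p.1 i * (f j).eval (p.2 i) = w j} ≤ (#Z + D * #H) ^ Fintype.card ι := by
  have key := card_filter_sum_smul_apply_eq_le (ι := ι) (v := fun a j ↦ (f j).eval a)
    (by rwa [Module.finrank_fintype_fun_eq_card])
    (fun W hW ↦ card_filter_eval_mem_le hf hD Z hW) H w
  simpa only [funext_iff, Finset.sum_apply, Pi.smul_apply, smul_eq_mul] using key

end Polynomials

section AuxCount

open Polynomial

theorem WellConditioned.linearIndependent {t : ℕ} {f : Fin t → ℤ[X]} (hf : WellConditioned f) :
    LinearIndependent ℤ f :=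
  linearIndependent_of_natDegree_injective hf.1
    (show StrictAnti fun j ↦ (f j).natDegree from fun i j ↦ hf.2.1 i j).injective

variable {r s t D : ℕ} {f : Fin t → ℤ[X]}

theorem auxCount_le (ht : 2 * s ≤ t) (hf : LinearIndependent ℤ f)
    (hD : ∀ j, (f j).natDegree ≤ D) (X : ℝ) :
    auxCount s r f X ≤ (⌊X⌋₊ + D * (2 * ⌊X ^ r⌋₊ + 1)) ^ (2 * s) := by
  classical
  let H : Finset ℚ := (Icc (-⌊X ^ r⌋₊ : ℤ) ⌊X ^ r⌋₊).image Int.cast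
  let Z : Finset ℚ := (Icc (1 : ℤ) ⌊X⌋₊).image Int.cast
  have hH : #H = 2 * ⌊X ^ r⌋₊ + 1 := by
    rw [card_image_of_injective _ Int.cast_injective, Int.card_Icc]
    omega
  have hZ : #Z = ⌊X⌋₊ := by
    simp [Z, card_image_of_injective _ Int.cast_injective]
  have key := card_filter_sum_mul_eval_eq_le (ι := Fin (2 * s)) (by simpa using ht)
    (linearIndependent_map_fractionRing ℚ hf) (fun j ↦ natDegree_map_le.trans (hD j)) H Z 0
  rw [hH, hZ, Fintype.card_fin, ← Set.ncard_coe_finset, coe_filter] at key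
  refine (Set.ncard_le_ncard_of_injOn (Prod.map (Int.cast ∘ ·) (Int.cast ∘ ·)) ?_
    (Int.cast_injective.comp_left.prodMap Int.cast_injective.comp_left).injOn).trans key
  rintro ⟨h, z⟩ ⟨hh, hz, hsum⟩
  have hhH (i : Fin (2 * s)) : (h i : ℚ) ∈ H := by
    have hle : (h i).natAbs ≤ ⌊X ^ r⌋₊ := Nat.le_floor (by simpa using hh i)
    exact mem_image_of_mem _ (mem_Icc.mpr (by omega))
  have hzZ (i : Fin (2 * s)) : (z i : ℚ) ∈ Z := by
    have hpos : 1 ≤ z i := (hz i).1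
    have hle : (z i).toNat ≤ ⌊X⌋₊ := Nat.le_floor <| by
      rw [← Int.cast_natCast, Int.toNat_of_nonneg (by omega)]
      exact (hz i).2
    exact mem_image_of_mem _ (mem_Icc.mpr (by omega))
  refine ⟨mem_product.mpr ⟨Fintype.mem_piFinset.mpr hhH, Fintype.mem_piFinset.mpr hzZ⟩,
    fun j ↦ ?_⟩
  simpa using! congrArg (Int.cast : ℤ → ℚ) (hsum j)

theorem auxCount_bound_many_polynomials_general (hr : 1 ≤ r) (ht : 2 * s ≤ t)
    (hf : LinearIndependent ℤ f) (hD : ∀ j, (f j).natDegree ≤ D) {X : ℝ} (hX : 1 ≤ X) :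
    (auxCount s r f X : ℝ) ≤ (3 * D + 1) ^ (2 * s) * X ^ (2 * r * s) := by
  have hXr : X ≤ X ^ r := le_self_pow₀ hX (by omega)
  have hfloor : (⌊X⌋₊ : ℝ) ≤ X := Nat.floor_le (by linarith)
  have hfloor_pow : (⌊X ^ r⌋₊ : ℝ) ≤ X ^ r := Nat.floor_le (by positivity)
  calc
    (auxCount s r f X : ℝ) ≤ (⌊X⌋₊ + D * (2 * ⌊X ^ r⌋₊ + 1)) ^ (2 * s) :=
      mod_cast auxCount_le ht hf hD X
    _ ≤ (X ^ r + D * (3 * X ^ r)) ^ (2 * s) := by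
      gcongr <;> linarith
    _ = ((3 * D + 1) * X ^ r) ^ (2 * s) := by congr 1; ring
    _ = (3 * D + 1) ^ (2 * s) * X ^ (2 * r * s) := by
      rw [mul_pow, ← pow_mul, mul_left_comm r, ← mul_assoc 2]

end AuxCount

theorem auxCount_bound_many_polynomials
    (r s t : ℕ) (hr : 1 ≤ r) (hs : 1 ≤ s) (ht : 2 * s ≤ t)
    (f : Fin t → Polynomial ℤ) (hf : WellConditioned f) :
    ∃ C X₀ : ℝ, ∀ X : ℝ, X₀ ≤ X →
      (auxCount s r f X : ℝ) ≤ C * X ^ (2 * r * s) :=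
  ⟨_, 1, fun _ hX ↦ auxCount_bound_many_polynomials_general hr ht hf.linearIndependent
    (fun j ↦ le_sup (f := fun j ↦ (f j).natDegree) (mem_univ j)) hX⟩
end

section
/- Suppose n ≥ 1, f = (f_1,…,f_{2n+1}) is a well-conditioned (2n+1)-tuple of polynomials with integer coefficients, and Ψ ∈ ℤ[w_1,…,w_{2n+1}] is a nonzero polynomial such that Ψ(σ_{1,n}(z;h),…,σ_{2n+1,n}(z;h)) = 0 identically and Ψ(σ_{1,n+1}(z;h),…,σ_{2n+1,n+1}(z;h)) is not the zero polynomial. Then there exists a nonzero polynomial Φ ∈ ℤ[z_1,…,z_{n+1},h_1,…,h_{n+1}] such that, identically in z_1,…,z_{n+1},h_1,…,h_{n+1}, Ψ(σ_{1,n+1}(z;h),…,σ_{2n+1,n+1}(z;h)) = Φ(z;h)·h_1⋯h_{n+1}·∏_{1≤i<j≤n+1}(z_i−z_j). -/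
open Finset

/-- `sigmaPoly f n j` is the polynomial `σ_{j,n}(z;h) = h_1 f_j(z_1) + ⋯ + h_n f_j(z_n)`
in the variables `z_1, …, z_n` (encoded as `Sum.inl`) and `h_1, …, h_n` (encoded as
`Sum.inr`). -/
noncomputable def sigmaPoly {t : ℕ} (f : Fin t → Polynomial ℤ) (n : ℕ) (j : Fin t) :
    MvPolynomial (Fin n ⊕ Fin n) ℤ :=
  ∑ i : Fin n,
    MvPolynomial.X (Sum.inr i) * Polynomial.aeval (MvPolynomial.X (Sum.inl i)) (f j)

/-!
If a weight `h_i` is zero, or if two points `z_i`, `z_k` coincide (add their weights), then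
`∑ h_i f_j(z_i)` is a sum with one term fewer. So a `Ψ` which vanishes on all sums of length `n`
takes on every sum of length `n + 1` a value which is zero modulo `h_i` and modulo `z_i - z_k`.
When the `z_i` and `h_i` are variables, these divisors are primes and no one of them divides
another, so their product divides that value.
-/

open MvPolynomial

section WeightedSum

variable {R A B ι σ : Type*} [CommRing R] [CommRing A] [Algebra R A] [CommRing B] [Algebra R B]

/-- The sum `∑ i, h i * p (z i)` of the values of `p` at the points `z i` with the weights `h i`. -/
noncomputable def weightedSum [Fintype σ] (p : Polynomial R) (z h : σ → A) : A :=
  ∑ i, h i * Polynomial.aeval (z i) p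

variable (R σ) in
/-- The weighted sum of values of `p` whose points and weights are independent variables: the
points are the variables `X (Sum.inl i)`, the weights are the variables `X (Sum.inr i)`. Over `ℤ`
and for `σ = Fin n`, this is `sigmaPoly`. -/
noncomputable def genericWeightedSum [Fintype σ] (p : Polynomial R) : MvPolynomial (σ ⊕ σ) R :=
  weightedSum p (fun i ↦ X (Sum.inl i)) (fun i ↦ X (Sum.inr i))

theorem map_weightedSum [Fintype σ] (φ : A →ₐ[R] B) (p : Polynomial R) (z h : σ → A) :
    φ (weightedSum p z h) = weightedSum p (φ ∘ z) (φ ∘ h) := by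
  simp only [weightedSum, map_sum, map_mul, Polynomial.aeval_algHom_apply, Function.comp_apply]

theorem aeval_genericWeightedSum [Fintype σ] (p : Polynomial R) (z h : σ → A) :
    aeval (Sum.elim z h) (genericWeightedSum R σ p) = weightedSum p z h := by
  rw [genericWeightedSum, map_weightedSum]
  congr 1 <;> ext i <;> simp

theorem weightedSum_succAbove {n : ℕ} (p : Polynomial R) (z h : Fin (n + 1) → A)
    (i : Fin (n + 1)) :
    weightedSum p z h =
      h i * Polynomial.aeval (z i) p + weightedSum p (z ∘ i.succAbove) (h ∘ i.succAbove) :=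
  Fin.sum_univ_succAbove _ i

theorem weightedSum_of_weight_eq_zero {n : ℕ} (p : Polynomial R) (z : Fin (n + 1) → A)
    {h : Fin (n + 1) → A} {i : Fin (n + 1)} (hi : h i = 0) :
    weightedSum p z h = weightedSum p (z ∘ i.succAbove) (h ∘ i.succAbove) := by
  rw [weightedSum_succAbove p z h i, hi, zero_mul, zero_add]

theorem weightedSum_add_single [Fintype σ] [DecidableEq σ] (p : Polynomial R) (z h : σ → A)
    (k : σ) (a : A) :
    weightedSum p z (h + Pi.single k a) = a * Polynomial.aeval (z k) p + weightedSum p z h := by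
  simp [weightedSum, add_mul, sum_add_distrib, Pi.single_apply, add_comm]

theorem weightedSum_of_point_eq {n : ℕ} (p : Polynomial R) {z : Fin (n + 1) → A}
    (h : Fin (n + 1) → A) {i : Fin (n + 1)} {k : Fin n} (hik : z i = z (i.succAbove k)) :
    weightedSum p z h =
      weightedSum p (z ∘ i.succAbove) (h ∘ i.succAbove + Pi.single k (h i)) := by
  rw [weightedSum_add_single, weightedSum_succAbove p z h i, hik, Function.comp_apply]

variable {f : ι → Polynomial R} {Ψ : MvPolynomial ι R}

theorem aeval_weightedSum_eq_zero [Fintype σ]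
    (hΨ : aeval (fun j ↦ genericWeightedSum R σ (f j)) Ψ = 0) (z h : σ → A) :
    aeval (fun j ↦ weightedSum (f j) z h) Ψ = 0 := by
  simpa only [comp_aeval_apply, aeval_genericWeightedSum, map_zero] using
    congrArg (aeval (R := R) (Sum.elim z h)) hΨ

theorem dvd_aeval_weightedSum_iff [Fintype σ] (z h : σ → A) (a : A) :
    a ∣ aeval (fun j ↦ weightedSum (f j) z h) Ψ ↔
      aeval (fun j ↦ weightedSum (f j) (Ideal.Quotient.mkₐ R (Ideal.span {a}) ∘ z)
        (Ideal.Quotient.mkₐ R (Ideal.span {a}) ∘ h)) Ψ = 0 := by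
  rw [← Ideal.Quotient.eq_zero_iff_dvd, ← Ideal.Quotient.mkₐ_eq_mk R, comp_aeval_apply]
  simp only [map_weightedSum]

theorem weight_dvd_aeval_weightedSum {n : ℕ}
    (hΨ : aeval (fun j ↦ genericWeightedSum R (Fin n) (f j)) Ψ = 0)
    (z h : Fin (n + 1) → A) (i : Fin (n + 1)) :
    h i ∣ aeval (fun j ↦ weightedSum (f j) z h) Ψ := by
  have weight_eq_zero : (Ideal.Quotient.mkₐ R (Ideal.span {h i}) ∘ h) i = 0 :=
    Ideal.Quotient.eq_zero_iff_dvd _ _ |>.2 dvd_rfl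
  rw [dvd_aeval_weightedSum_iff]
  simp only [weightedSum_of_weight_eq_zero _ _ weight_eq_zero]
  exact aeval_weightedSum_eq_zero hΨ _ _

theorem point_sub_point_dvd_aeval_weightedSum {n : ℕ}
    (hΨ : aeval (fun j ↦ genericWeightedSum R (Fin n) (f j)) Ψ = 0)
    (z h : Fin (n + 1) → A) {i k : Fin (n + 1)} (hik : i ≠ k) :
    z i - z k ∣ aeval (fun j ↦ weightedSum (f j) z h) Ψ := by
  obtain ⟨k, rfl⟩ := Fin.exists_succAbove_eq hik.symm
  have points_eq : (Ideal.Quotient.mkₐ R (Ideal.span {z i - z (i.succAbove k)}) ∘ z) i =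
      (Ideal.Quotient.mkₐ R (Ideal.span {z i - z (i.succAbove k)}) ∘ z) (i.succAbove k) :=
    Ideal.Quotient.mk_eq_mk_iff_sub_mem _ _ |>.2 (Ideal.mem_span_singleton_self _)
  rw [dvd_aeval_weightedSum_iff]
  simp only [weightedSum_of_point_eq _ _ points_eq]
  exact aeval_weightedSum_eq_zero hΨ _ _

end WeightedSum

theorem prod_dvd_of_prime_of_pairwise_not_dvd {M ι : Type*} [CommMonoidWithZero M] {s : Finset ι}
    {p : ι → M} {x : M} (hp : ∀ i ∈ s, Prime (p i))
    (hs : (s : Set ι).Pairwise fun i j ↦ ¬ p i ∣ p j) (hx : ∀ i ∈ s, p i ∣ x) :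
    ∏ i ∈ s, p i ∣ x := by
  classical
  induction s using Finset.induction_on generalizing x with
  | empty => simp
  | insert a s ha ih =>
    rw [forall_mem_insert] at hp hx
    obtain ⟨⟨y, rfl⟩, hx⟩ := hx
    rw [prod_insert ha]
    refine mul_dvd_mul_left _ (ih hp.2 (hs.mono (by simp)) fun i hi ↦ ?_)
    have not_dvd : ¬ p i ∣ p a := hs (by simp [hi]) (by simp) (ne_of_mem_of_not_mem hi ha)
    exact (hp.2 i hi |>.dvd_or_dvd (hx i hi)).resolve_left not_dvd

section LinearForms

variable {R τ : Type*} [CommRing R]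

/-- The automorphism of a polynomial ring which replaces the variable `v` by `X v - X w` and fixes
all other variables. It transports primality from `X v` to `X v - X w`. -/
noncomputable def shearEquiv [DecidableEq τ] {v w : τ} (hvw : v ≠ w) :
    MvPolynomial τ R ≃ₐ[R] MvPolynomial τ R :=
  AlgEquiv.ofAlgHom (aeval (Function.update X v (X v - X w)))
    (aeval (Function.update X v (X v + X w)))
    (by ext u : 1; obtain rfl | hu := eq_or_ne u v <;> simp [hvw.symm, *])
    (by ext u : 1; obtain rfl | hu := eq_or_ne u v <;> simp [hvw.symm, *])

theorem prime_X_sub_X [IsDomain R] {v w : τ} (hvw : v ≠ w) :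
    Prime (X v - X w : MvPolynomial τ R) := by
  classical
  have shear_X : shearEquiv hvw (X v : MvPolynomial τ R) = X v - X w := by simp [shearEquiv]
  rw [← shear_X, MulEquiv.prime_iff]
  exact X_prime

variable [Nontrivial R]

theorem not_X_dvd_X_sub_X (u : τ) {v w : τ} (hvw : v ≠ w) :
    ¬ (X u : MvPolynomial τ R) ∣ X v - X w := by
  classical
  wlog hu : u ≠ v generalizing v w
  · rw [dvd_sub_comm]
    exact this hvw.symm (not_not.1 hu ▸ hvw)
  intro hdvd
  simpa [hu, hvw.symm] using map_dvd (eval (Pi.single v 1)) hdvd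

theorem not_X_sub_X_dvd_X (u v w : τ) : ¬ (X v - X w : MvPolynomial τ R) ∣ X u := fun hdvd ↦ by
  simpa using map_dvd (eval 1) hdvd

theorem not_X_sub_X_dvd_X_sub_X {a b c d : τ} (hcd : c ≠ d) (hne : s(a, b) ≠ s(c, d)) :
    ¬ (X a - X b : MvPolynomial τ R) ∣ X c - X d := by
  classical
  wlog hc : c ≠ a ∧ c ≠ b generalizing c d
  · rw [dvd_sub_comm]
    exact this hcd.symm (by rwa [Sym2.eq_swap (a := d)]) (by grind)
  intro hdvd
  simpa [hc.1.symm, hc.2.symm, hcd.symm] using map_dvd (eval (Pi.single c 1)) hdvd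

end LinearForms

theorem prod_X_mul_prod_X_sub_X_dvd {R σ : Type*} [CommRing R] [IsDomain R] [Fintype σ]
    [LinearOrder σ] {P : MvPolynomial (σ ⊕ σ) R} (hX : ∀ i, X (Sum.inr i) ∣ P)
    (hX_sub_X : ∀ i j, i < j → X (Sum.inl i) - X (Sum.inl j) ∣ P) :
    (∏ i, X (Sum.inr i)) *
      ∏ p ∈ univ.filter (fun p : σ × σ ↦ p.1 < p.2), (X (Sum.inl p.1) - X (Sum.inl p.2)) ∣ P := by
  let factor : σ ⊕ σ × σ → MvPolynomial (σ ⊕ σ) R :=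
    Sum.elim (fun i ↦ X (Sum.inr i)) fun p ↦ X (Sum.inl p.1) - X (Sum.inl p.2)
  let indices : Finset (σ ⊕ σ × σ) := univ.disjSum {p | p.1 < p.2}
  have mem_indices {p : σ × σ} : Sum.inr p ∈ indices ↔ p.1 < p.2 := by simp [indices]
  have inl_ne_inl {p : σ × σ} (hp : Sum.inr p ∈ indices) :
      (Sum.inl p.1 : σ ⊕ σ) ≠ Sum.inl p.2 := Sum.inl_injective.ne (mem_indices.1 hp).ne
  suffices ∏ q ∈ indices, factor q ∣ P by
    simpa only [indices, prod_disjSum, factor, Sum.elim_inl, Sum.elim_inr] using this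
  apply prod_dvd_of_prime_of_pairwise_not_dvd
  · rintro (i | p) hp
    · exact X_prime
    · exact prime_X_sub_X (inl_ne_inl hp)
  · rintro (i | p) hp (j | q) hq hne
    · simpa [factor, X_dvd_X] using hne
    · exact not_X_dvd_X_sub_X _ (inl_ne_inl hq)
    · exact not_X_sub_X_dvd_X _ _ _
    · have hp_lt := mem_indices.1 hp
      have hq_lt := mem_indices.1 hq
      exact not_X_sub_X_dvd_X_sub_X (inl_ne_inl hq) (by grind)
  · rintro (i | p) hp
    · exact hX i
    · exact hX_sub_X _ _ (mem_indices.1 hp)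

theorem fundamental_polynomial_identity_general {R ι : Type*} [CommRing R] [IsDomain R] {n : ℕ}
    (f : ι → Polynomial R) (Ψ : MvPolynomial ι R)
    (hvanish : aeval (fun j ↦ genericWeightedSum R (Fin n) (f j)) Ψ = 0)
    (hnonvanish : aeval (fun j ↦ genericWeightedSum R (Fin (n + 1)) (f j)) Ψ ≠ 0) :
    ∃ Φ : MvPolynomial (Fin (n + 1) ⊕ Fin (n + 1)) R, Φ ≠ 0 ∧
      aeval (fun j ↦ genericWeightedSum R (Fin (n + 1)) (f j)) Ψ =
        Φ * (∏ i : Fin (n + 1), X (Sum.inr i)) *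
          ∏ p ∈ univ.filter (fun p : Fin (n + 1) × Fin (n + 1) ↦ p.1 < p.2),
            (X (Sum.inl p.1) - X (Sum.inl p.2)) := by
  obtain ⟨Φ, hΦ⟩ := prod_X_mul_prod_X_sub_X_dvd
    (weight_dvd_aeval_weightedSum (A := MvPolynomial (Fin (n + 1) ⊕ Fin (n + 1)) R) hvanish
      (fun i ↦ X (Sum.inl i)) fun i ↦ X (Sum.inr i))
    fun _ _ hij ↦ point_sub_point_dvd_aeval_weightedSum hvanish _ _ hij.ne
  refine ⟨Φ, ?_, hΦ.trans (by rw [mul_comm, mul_assoc])⟩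
  rintro rfl
  exact hnonvanish (hΦ.trans (mul_zero _))

theorem fundamental_polynomial_identity
    (n : ℕ) (hn : 1 ≤ n) (f : Fin (2 * n + 1) → Polynomial ℤ)
    (hf : WellConditioned f)
    (Ψ : MvPolynomial (Fin (2 * n + 1)) ℤ) (hΨ : Ψ ≠ 0)
    (hvanish : MvPolynomial.aeval (fun j => sigmaPoly f n j) Ψ = 0)
    (hnonvanish : MvPolynomial.aeval (fun j => sigmaPoly f (n + 1) j) Ψ ≠ 0) :
    ∃ Φ : MvPolynomial (Fin (n + 1) ⊕ Fin (n + 1)) ℤ, Φ ≠ 0 ∧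
      MvPolynomial.aeval (fun j => sigmaPoly f (n + 1) j) Ψ =
        Φ * (∏ i : Fin (n + 1), MvPolynomial.X (Sum.inr i)) *
          ∏ p ∈ Finset.univ.filter (fun p : Fin (n + 1) × Fin (n + 1) => p.1 < p.2),
            (MvPolynomial.X (Sum.inl p.1) - MvPolynomial.X (Sum.inl p.2)) := by
  exact fundamental_polynomial_identity_general f Ψ hvanish hnonvanish
end

section
/- Let n ≥ 0 and let f = (f_1,…,f_{2n+1}) be a well-conditioned (2n+1)-tuple of polynomials with integer coefficients. Let D_n be the (2n+1)×(2n+1) matrix whose first n rows are (h_i f_j'(z_i))_{1≤j≤2n+1} for 1 ≤ i ≤ n and whose last n+1 rows are (f_j(z_i))_{1≤j≤2n+1} for 1 ≤ i ≤ n+1, where f_j' denotes the derivative of f_j. Then det(D_n) is not identically zero as a polynomial in the variables z_1,…,z_{n+1},h_1,…,h_n. -/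
open Finset

/-- The `(2n+1) × (2n+1)` matrix `D_n`, with entries in the polynomial ring over `ℤ` in
the variables `z_1, …, z_{n+1}` (encoded as `Sum.inl`) and `h_1, …, h_n` (encoded as
`Sum.inr`): its first `n` rows are `(h_i f_j'(z_i))_{1 ≤ j ≤ 2n+1}` for `1 ≤ i ≤ n`, and
its last `n+1` rows are `(f_j(z_i))_{1 ≤ j ≤ 2n+1}` for `1 ≤ i ≤ n+1`. -/
noncomputable def Dmat (n : ℕ) (f : Fin (2 * n + 1) → Polynomial ℤ) :
    Matrix (Fin (2 * n + 1)) (Fin (2 * n + 1)) (MvPolynomial (Fin (n + 1) ⊕ Fin n) ℤ) :=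
  fun i j =>
    if h : (i : ℕ) < n then
      MvPolynomial.X (Sum.inr ⟨(i : ℕ), h⟩) *
        Polynomial.aeval (MvPolynomial.X (Sum.inl ⟨(i : ℕ), by omega⟩))
          (Polynomial.derivative (f j))
    else
      Polynomial.aeval
        (MvPolynomial.X (Sum.inl ⟨(i : ℕ) - n, by have := i.isLt; omega⟩)) (f j)

/-!
The `f_j` are linearly independent because their degrees are distinct.
Specialise every `h_i` to `1` and the `z_i` to rational numbers: a vector in the kernel of the
specialised matrix is the coefficient vector of a combination `p` of the `f_j` which vanishes at
all `z_i` and whose derivative vanishes at the first `n` of them. So it is enough to choose the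
`z_i` such that only `p = 0` in the span `V` of the `f_j` satisfies these `2n + 1` conditions.
The points are chosen greedily. While `dim V ≥ 2`, two independent elements of `V` have a nonzero
Wronskian, and at a point `w` where it does not vanish the two conditions `p(w) = p′(w) = 0` cut
the dimension down by two; after `n` such steps at most one dimension is left, and a single point
removes it.
-/

open Polynomial

theorem linearIndependent_of_injective_natDegree {R ι : Type*} [Ring R] [IsDomain R]
    {f : ι → R[X]} (hne : ∀ i, f i ≠ 0) (hinj : Function.Injective fun i => (f i).natDegree) :
    LinearIndependent R f := by
  rw [linearIndependent_iff']
  intro s g hsum i hi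
  have hdeg := degree_sum_eq_of_disjoint (fun j => g j • f j) s (by
    rintro j ⟨-, hj⟩ k ⟨-, hk⟩ hjk heq
    have hnat : (g j • f j).natDegree = (g k • f k).natDegree := natDegree_eq_of_degree_eq heq
    rw [natDegree_smul _ (left_ne_zero_of_smul hj), natDegree_smul _ (left_ne_zero_of_smul hk)]
      at hnat
    exact hjk (hinj hnat))
  rw [hsum, degree_zero, eq_comm, Finset.sup_eq_bot_iff] at hdeg
  exact (smul_eq_zero.1 (degree_eq_bot.1 (hdeg i hi))).resolve_right (hne i)

theorem linearIndependent_map_algebraMap {R ι : Type*} (K : Type*) [CommRing R] [CommRing K]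
    [Algebra R K] [IsFractionRing R K] {f : ι → R[X]} (hf : LinearIndependent R f) :
    LinearIndependent K fun i => (f i).map (algebraMap R K) := by
  rw [← LinearIndependent.iff_fractionRing R K]
  refine hf.map' (mapAlgHom (Algebra.ofId R K)).toLinearMap (LinearMap.ker_eq_bot.2 ?_)
  exact map_injective _ (IsFractionRing.injective R K)

theorem wronskian_mul_left_mul_left {R : Type*} [CommRing R] (g a b : R[X]) :
    wronskian (g * a) (g * b) = g ^ 2 * wronskian a b := by
  simp only [wronskian, derivative_mul]
  ring

theorem exists_eval_ne_zero {R : Type*} [CommRing R] [IsDomain R] [Infinite R] {p : R[X]}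
    (hp : p ≠ 0) : ∃ w, p.eval w ≠ 0 := by
  contrapose! hp
  exact Polynomial.funext (by simpa using hp)

/-- The first jet `(p(w), p′(w))` of a polynomial `p` at `w`, as a linear map in `p`. -/
noncomputable def jetEval {R : Type*} [CommSemiring R] (w : R) : R[X] →ₗ[R] R × R :=
  (leval w).prod (leval w ∘ₗ derivative)

@[simp]
theorem jetEval_apply {R : Type*} [CommSemiring R] (w : R) (p : R[X]) :
    jetEval w p = (p.eval w, p.derivative.eval w) :=
  rfl

theorem linearIndependent_jetEval {R : Type*} [CommRing R] [NoZeroDivisors R] {p q : R[X]} {w : R}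
    (hw : (wronskian p q).eval w ≠ 0) : LinearIndependent R ![jetEval w p, jetEval w q] := by
  simp only [wronskian, eval_sub, eval_mul] at hw
  rw [LinearIndependent.pair_iff]
  intro s t hst
  simp only [jetEval_apply, Prod.smul_mk, Prod.mk_add_mk, Prod.mk_eq_zero, smul_eq_mul] at hst
  obtain ⟨hval, hder⟩ := hst
  constructor
  · refine (mul_eq_zero.1 ?_).resolve_right hw
    linear_combination q.derivative.eval w * hval - q.eval w * hder
  · refine (mul_eq_zero.1 ?_).resolve_right hw
    linear_combination p.eval w * hder - p.derivative.eval w * hval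

/-- Nodes `z_1, …, z_{n+1}` are Hermite unisolvent for a space `V` of polynomials if an element of
`V` is determined by its values at all of them together with the values of its derivative at
`z_1, …, z_n`. -/
def HermiteUnisolvent {R : Type*} [CommRing R] (V : Submodule R R[X]) {n : ℕ}
    (z : Fin (n + 1) → R) : Prop :=
  ∀ p ∈ V, (∀ i, p.eval (z i) = 0) → (∀ i : Fin n, p.derivative.eval (z i.castSucc) = 0) → p = 0

theorem HermiteUnisolvent.cons {R : Type*} [CommRing R] {V : Submodule R R[X]} {n : ℕ} {w : R}
    {z : Fin (n + 1) → R} (hz : HermiteUnisolvent (V ⊓ LinearMap.ker (jetEval w)) z) :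
    HermiteUnisolvent V (Fin.cons w z : Fin (n + 2) → R) := by
  intro p hpV hval hder
  have hjet : p ∈ LinearMap.ker (jetEval w) := Prod.ext (hval 0) (hder 0)
  exact hz p ⟨hpV, hjet⟩ (fun i => hval i.succ) fun i => hder i.succ

theorem exists_hermiteUnisolvent_of_finrank_le_one {K : Type*} [Field K] [Infinite K] (n : ℕ)
    {V : Submodule K K[X]} [FiniteDimensional K V] (hV : Module.finrank K V ≤ 1) :
    ∃ z : Fin (n + 1) → K, HermiteUnisolvent V z := by
  obtain ⟨q, hq⟩ := finrank_le_one_iff.1 hV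
  obtain ⟨w, hw⟩ : ∃ w, (q : K[X]) ≠ 0 → (q : K[X]).eval w ≠ 0 := by
    by_contra! h
    obtain ⟨w, hw⟩ := exists_eval_ne_zero (h 0).1
    exact hw (h w).2
  refine ⟨fun _ => w, fun p hp hval _ => ?_⟩
  obtain ⟨c, hc⟩ := hq ⟨p, hp⟩
  obtain rfl : c • (q : K[X]) = p := congrArg Subtype.val hc
  have hcw : c = 0 ∨ (q : K[X]).eval w = 0 := by simpa using hval 0
  exact smul_eq_zero.2 (hcw.imp_right (not_imp_not.1 hw))

section Field

variable {K : Type*} [Field K] [CharZero K]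

theorem wronskian_ne_zero_of_linearIndependent {p q : K[X]} (h : LinearIndependent K ![p, q]) :
    wronskian p q ≠ 0 := by
  classical
  intro hW
  have hq : q ≠ 0 := h.ne_zero 1
  obtain ⟨a, b, hp_eq, hq_eq, hab⟩ := _root_.extract_gcd p q
  generalize GCDMonoid.gcd p q = g at hp_eq hq_eq
  subst hp_eq hq_eq
  rw [wronskian_mul_left_mul_left] at hW
  -- A zero Wronskian makes each of the coprime `a`, `b` divide its derivative, hence constant.
  have hW' : wronskian a b = 0 :=
    (mul_eq_zero.1 hW).resolve_left (pow_ne_zero 2 (left_ne_zero_of_mul hq))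
  obtain ⟨ha, hb⟩ := ((gcd_isUnit_iff a b).1 hab).wronskian_eq_zero_iff.1 hW'
  obtain ⟨α, rfl⟩ : ∃ α, a = C α := ⟨_, eq_C_of_derivative_eq_zero ha⟩
  obtain ⟨β, rfl⟩ : ∃ β, b = C β := ⟨_, eq_C_of_derivative_eq_zero hb⟩
  have hrel : β • (g * C α) + (-α) • (g * C β) = 0 := by
    simp only [smul_eq_C_mul, C_neg]
    ring
  have hβ : β = 0 := (LinearIndependent.pair_iff.1 h _ _ hrel).1
  exact hq (by rw [hβ, C_0, mul_zero])

theorem exists_finrank_inf_ker_jetEval_add_two_le {V : Submodule K K[X]} [FiniteDimensional K V]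
    (hV : 2 ≤ Module.finrank K V) :
    ∃ w, Module.finrank K ↥(V ⊓ LinearMap.ker (jetEval w)) + 2 ≤ Module.finrank K V := by
  obtain ⟨b, hb⟩ := exists_linearIndependent_of_le_finrank hV
  have hpair : ![(b 0 : K[X]), (b 1 : K[X])] = V.subtype ∘ b := by
    ext1 i
    fin_cases i <;> rfl
  have hpq : LinearIndependent K ![(b 0 : K[X]), (b 1 : K[X])] :=
    hpair ▸ hb.map' V.subtype V.ker_subtype
  obtain ⟨w, hw⟩ := exists_eval_ne_zero (wronskian_ne_zero_of_linearIndependent hpq)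
  let L : V →ₗ[K] K × K := jetEval w ∘ₗ V.subtype
  have hrange : 2 ≤ Module.finrank K (LinearMap.range L) := by
    rw [← Fintype.card_fin 2, ← finrank_span_eq_card (linearIndependent_jetEval hw)]
    refine Submodule.finrank_mono (Submodule.span_le.2 ?_)
    rintro _ ⟨i, rfl⟩
    fin_cases i
    exacts [⟨b 0, rfl⟩, ⟨b 1, rfl⟩]
  have hker : Module.finrank K ↥(V ⊓ LinearMap.ker (jetEval w)) =
      Module.finrank K (LinearMap.ker L) := by
    rw [LinearMap.ker_comp, ← Submodule.map_comap_subtype, Submodule.finrank_map_subtype_eq]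
  refine ⟨w, ?_⟩
  have := L.finrank_range_add_finrank_ker
  omega

theorem exists_hermiteUnisolvent (n : ℕ) (V : Submodule K K[X]) [FiniteDimensional K V]
    (hV : Module.finrank K V ≤ 2 * n + 1) : ∃ z : Fin (n + 1) → K, HermiteUnisolvent V z := by
  induction n generalizing V with
  | zero => exact exists_hermiteUnisolvent_of_finrank_le_one 0 hV
  | succ n ih =>
    by_cases hV2 : 2 ≤ Module.finrank K V
    · obtain ⟨w, hw⟩ := exists_finrank_inf_ker_jetEval_add_two_le hV2
      obtain ⟨z, hz⟩ := ih (V ⊓ LinearMap.ker (jetEval w)) (by omega)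
      exact ⟨Fin.cons w z, hz.cons⟩
    · exact exists_hermiteUnisolvent_of_finrank_le_one _ (by omega)

end Field

section Specialization

variable {n : ℕ} {A : Type*} [CommRing A] (z : Fin (n + 1) → A)

/-- The specialization `z_i ↦ z i`, `h_i ↦ 1` of the variables of `Dmat`. -/
noncomputable def nodeEval : MvPolynomial (Fin (n + 1) ⊕ Fin n) ℤ →ₐ[ℤ] A :=
  MvPolynomial.aeval (Sum.elim z 1)

theorem nodeEval_aeval_X_inl (i : Fin (n + 1)) (p : ℤ[X]) :
    nodeEval z (aeval (MvPolynomial.X (Sum.inl i)) p) = (p.map (algebraMap ℤ A)).eval (z i) := by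
  rw [← aeval_algHom_apply, nodeEval, MvPolynomial.aeval_X, Sum.elim_inl, aeval_def,
    eval₂_eq_eval_map]

theorem nodeEval_X_inr (i : Fin n) : nodeEval z (MvPolynomial.X (Sum.inr i)) = 1 := by
  rw [nodeEval, MvPolynomial.aeval_X, Sum.elim_inr, Pi.one_apply]

theorem map_nodeEval_Dmat_mulVec_eq_eval (f : Fin (2 * n + 1) → ℤ[X]) (v : Fin (2 * n + 1) → A)
    (i : Fin (n + 1)) :
    ((Dmat n f).map (nodeEval z)).mulVec v ⟨n + i, by omega⟩ =
      (∑ j, v j • (f j).map (algebraMap ℤ A)).eval (z i) := by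
  simp [Matrix.mulVec, dotProduct, Dmat, nodeEval_aeval_X_inl, eval_finsetSum, mul_comm]

theorem map_nodeEval_Dmat_mulVec_eq_eval_derivative (f : Fin (2 * n + 1) → ℤ[X])
    (v : Fin (2 * n + 1) → A) (i : Fin n) :
    ((Dmat n f).map (nodeEval z)).mulVec v ⟨i, by omega⟩ =
      (∑ j, v j • (f j).map (algebraMap ℤ A)).derivative.eval (z i.castSucc) := by
  simp [Matrix.mulVec, dotProduct, Dmat, nodeEval_aeval_X_inl, nodeEval_X_inr, eval_finsetSum,
    mul_comm, Fin.castSucc, Fin.castAdd, Fin.castLE]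

end Specialization

theorem det_Dmat_ne_zero_general (n : ℕ) (f : Fin (2 * n + 1) → ℤ[X])
    (hf : LinearIndependent ℤ f) : Matrix.det (Dmat n f) ≠ 0 := by
  intro hdet
  have hF := linearIndependent_map_algebraMap ℚ hf
  set F : Fin (2 * n + 1) → ℚ[X] := fun j => (f j).map (algebraMap ℤ ℚ)
  have := FiniteDimensional.span_of_finite ℚ (Set.finite_range F)
  obtain ⟨z, hz⟩ := exists_hermiteUnisolvent n (Submodule.span ℚ (Set.range F))
    ((finrank_range_le_card F).trans_eq (Fintype.card_fin _))
  have hdet' : ((Dmat n f).map (nodeEval z)).det = 0 := by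
    rw [← AlgHom.mapMatrix_apply, ← AlgHom.map_det, hdet, map_zero]
  obtain ⟨v, hv, hMv⟩ := Matrix.exists_mulVec_eq_zero_iff.2 hdet'
  have hcomb : ∑ j, v j • F j = 0 := by
    refine hz _ (Submodule.sum_mem _ fun j _ => Submodule.smul_mem _ _
      (Submodule.subset_span ⟨j, rfl⟩)) (fun i => ?_) fun i => ?_
    · rw [← map_nodeEval_Dmat_mulVec_eq_eval, hMv, Pi.zero_apply]
    · rw [← map_nodeEval_Dmat_mulVec_eq_eval_derivative, hMv, Pi.zero_apply]
  exact hv (_root_.funext (Fintype.linearIndependent_iff.1 hF v hcomb))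

theorem det_Dmat_ne_zero
    (n : ℕ) (f : Fin (2 * n + 1) → Polynomial ℤ) (hf : WellConditioned f) :
    Matrix.det (Dmat n f) ≠ 0 := by
  exact det_Dmat_ne_zero_general n f
    (linearIndependent_of_injective_natDegree hf.1 (StrictAnti.injective fun i j => hf.2.1 i j))
end

section
/- Suppose f ∈ ℤ[x] is a polynomial of degree k ≥ 1. Let u be an integer with 1 ≤ u ≤ k, and let h_1,…,h_u and a_1,…,a_u be fixed integers such that (h_1,…,h_u) ≠ (0,…,0) and a_i ≠ a_j whenever 1 ≤ i < j ≤ u. Then for any integer n, the equation ∑_{i=1}^u h_i f(z + a_i) = n has at most k integer solutions z. -/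
open Finset

/-! Let `j` be the first exponent with `∑ i, h i * a i ^ j ≠ 0`; by Vandermonde, `j` is less than
the number of shifts. Expanding each `f (z + a i)` in powers of `a i`, the first term of
`∑ i, h i * f (z + a i)` that survives is the one with `a i ^ j`, so this polynomial in `z` has
degree `k - j`, its leading coefficient being that of `f` times `k.choose j * ∑ i, h i * a i ^ j`;
this is nonzero in any domain where `k ! ≠ 0`, that is, of characteristic `0` or greater than `k`.
As `j < k`, it is not constant, so it takes each value at most `k - j` times. -/

section ShiftCombination

open Polynomial
open scoped Nat

variable {R ι : Type*} [Fintype ι]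

section CommSemiring

variable [CommSemiring R]

/-- The `j`-th moment `∑ i, h i * a i ^ j` of the nodes `a` with weights `h`; with `0 ^ 0 = 1`, the
`0`-th moment is the total weight even if some node is `0`. -/
def weightedMoment (h a : ι → R) (j : ℕ) : R :=
  ∑ i, h i * a i ^ j

/-- The combination `∑ i, h i * f (X + a i)` of translates of `f`. Translation is Mathlib's
`Polynomial.taylor`, whose coefficients are values of Hasse derivatives. -/
noncomputable def shiftCombination (h a : ι → R) (f : R[X]) : R[X] :=
  ∑ i, C (h i) * taylor (a i) f

theorem eval_shiftCombination (h a : ι → R) (f : R[X]) (z : R) :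
    (shiftCombination h a f).eval z = ∑ i, h i * f.eval (z + a i) := by
  simp [shiftCombination, eval_finsetSum, taylor_eval]

theorem coeff_shiftCombination_eq_sum (h a : ι → R) {f : R[X]} {m d : ℕ}
    (hd : f.natDegree ≤ m + d) :
    (shiftCombination h a f).coeff m =
      ∑ r ∈ range (d + 1), (hasseDeriv m f).coeff r * weightedMoment h a r := by
  have hderiv : (hasseDeriv m f).natDegree < d + 1 := by
    have := natDegree_hasseDeriv_le f m
    omega
  calc (shiftCombination h a f).coeff m
      = ∑ i, h i * (hasseDeriv m f).eval (a i) := by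
        simp only [shiftCombination, finsetSum_coeff, coeff_C_mul, taylor_coeff]
    _ = ∑ i, ∑ r ∈ range (d + 1), (hasseDeriv m f).coeff r * (h i * a i ^ r) := by
        simp only [eval_eq_sum_range' hderiv, mul_sum, mul_left_comm]
    _ = ∑ r ∈ range (d + 1), (hasseDeriv m f).coeff r * weightedMoment h a r := by
        rw [sum_comm]
        simp only [weightedMoment, mul_sum]

theorem coeff_shiftCombination_of_weightedMoment_eq_zero {h a : ι → R} {f : R[X]} {m j : ℕ}
    (hmoment : ∀ r < j, weightedMoment h a r = 0) (hm : f.natDegree ≤ m + j) :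
    (shiftCombination h a f).coeff m =
      (m + j).choose m * f.coeff (m + j) * weightedMoment h a j := by
  have hlow : ∑ r ∈ range j, (hasseDeriv m f).coeff r * weightedMoment h a r = 0 :=
    sum_eq_zero fun r hr => by rw [hmoment r (mem_range.1 hr), mul_zero]
  rw [coeff_shiftCombination_eq_sum h a hm, sum_range_succ, hlow, zero_add, hasseDeriv_coeff,
    add_comm j]

theorem natDegree_shiftCombination_le {h a : ι → R} {j : ℕ}
    (hmoment : ∀ r < j, weightedMoment h a r = 0) (f : R[X]) :
    (shiftCombination h a f).natDegree ≤ f.natDegree - j := by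
  refine natDegree_le_iff_coeff_eq_zero.2 fun m hm => ?_
  have hlt : f.natDegree < m + j := by omega
  rw [coeff_shiftCombination_of_weightedMoment_eq_zero hmoment hlt.le,
    coeff_eq_zero_of_natDegree_lt hlt, mul_zero, zero_mul]

theorem natDegree_shiftCombination [NoZeroDivisors R] {h a : ι → R} {f : R[X]} {j : ℕ}
    (hmoment : ∀ r < j, weightedMoment h a r = 0) (hj : weightedMoment h a j ≠ 0)
    (hchoose : (f.natDegree.choose j : R) ≠ 0) :
    (shiftCombination h a f).natDegree = f.natDegree - j := by
  rcases eq_or_ne f 0 with rfl | hf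
  · simp [shiftCombination]
  have hjf : j ≤ f.natDegree := Nat.choose_ne_zero_iff.1 fun hzero =>
    hchoose (by rw [hzero, Nat.cast_zero])
  refine natDegree_eq_of_le_of_coeff_ne_zero (natDegree_shiftCombination_le hmoment f) ?_
  have hsub : f.natDegree - j + j = f.natDegree := Nat.sub_add_cancel hjf
  rw [coeff_shiftCombination_of_weightedMoment_eq_zero hmoment hsub.ge, hsub,
    Nat.choose_symm hjf]
  exact mul_ne_zero (mul_ne_zero hchoose (leadingCoeff_ne_zero.2 hf)) hj

end CommSemiring

theorem cast_choose_ne_zero_of_cast_factorial_ne_zero [Semiring R] {k j : ℕ}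
    (hk : (k ! : R) ≠ 0) (hj : j ≤ k) : (k.choose j : R) ≠ 0 := by
  rw [← Nat.choose_mul_factorial_mul_factorial hj, mul_assoc, Nat.cast_mul] at hk
  exact left_ne_zero_of_mul hk

variable [CommRing R] [IsDomain R]

theorem exists_weightedMoment_ne_zero {h a : ι → R} (hh : h ≠ 0) (ha : Function.Injective a) :
    ∃ j < Fintype.card ι, weightedMoment h a j ≠ 0 := by
  by_contra! hzero
  let e := (Fintype.equivFin ι).symm
  have hreindexed : h ∘ e = 0 :=
    Matrix.eq_zero_of_forall_pow_sum_mul_pow_eq_zero (ha.comp e.injective) fun j =>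
      (e.sum_comp fun i => h i * a i ^ (j : ℕ)).trans (hzero j j.isLt)
  exact hh (e.surjective.injective_comp_right hreindexed)

theorem exists_first_weightedMoment_ne_zero {h a : ι → R} (hh : h ≠ 0)
    (ha : Function.Injective a) :
    ∃ j < Fintype.card ι, weightedMoment h a j ≠ 0 ∧ ∀ r < j, weightedMoment h a r = 0 := by
  classical
  obtain ⟨i, hi, hne⟩ := exists_weightedMoment_ne_zero hh ha
  have hex : ∃ j, weightedMoment h a j ≠ 0 := ⟨i, hne⟩
  exact ⟨Nat.find hex, (Nat.find_min' hex hne).trans_lt hi, Nat.find_spec hex,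
    fun r hr => not_not.1 (Nat.find_min hex hr)⟩

theorem exists_finset_card_le_natDegree_of_eval_eq {p : R[X]} (hp : 0 < p.natDegree) (n : R) :
    ∃ S : Finset R, #S ≤ p.natDegree ∧ ∀ z, p.eval z = n → z ∈ S := by
  classical
  have hdeg : 0 < p.degree := natDegree_pos_iff_degree_pos.1 hp
  exact ⟨(p - C n).roots.toFinset,
    (Multiset.toFinset_card_le _).trans (card_roots_sub_C' hdeg),
    fun z hz => Multiset.mem_toFinset.2 ((mem_roots_sub_C hdeg).2 hz)⟩

theorem shifted_polynomial_equation_few_solutions_general {f : R[X]}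
    (hfactorial : (f.natDegree ! : R) ≠ 0) {h a : ι → R} (hh : h ≠ 0)
    (ha : Function.Injective a) (hcard : Fintype.card ι ≤ f.natDegree) (n : R) :
    ∃ S : Finset R, #S ≤ f.natDegree ∧ ∀ z, ∑ i, h i * f.eval (z + a i) = n → z ∈ S := by
  obtain ⟨j, hjcard, hj, hmoment⟩ := exists_first_weightedMoment_ne_zero hh ha
  have hjf : j < f.natDegree := hjcard.trans_le hcard
  have hdeg : (shiftCombination h a f).natDegree = f.natDegree - j :=
    natDegree_shiftCombination hmoment hj
      (cast_choose_ne_zero_of_cast_factorial_ne_zero hfactorial hjf.le)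
  obtain ⟨S, hScard, hS⟩ :=
    exists_finset_card_le_natDegree_of_eval_eq (hdeg ▸ Nat.sub_pos_of_lt hjf) n
  exact ⟨S, hScard.trans (hdeg.trans_le (Nat.sub_le _ _)), fun z hz =>
    hS z ((eval_shiftCombination h a f z).trans hz)⟩

end ShiftCombination

theorem shifted_polynomial_equation_few_solutions
    (f : Polynomial ℤ) (k : ℕ) (hk : 1 ≤ k) (hdeg : f.natDegree = k)
    (u : ℕ) (hu : 1 ≤ u) (huk : u ≤ k)
    (h a : Fin u → ℤ) (hh : h ≠ 0)
    (ha : ∀ i j : Fin u, i < j → a i ≠ a j) (n : ℤ) :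
    ∃ S : Finset ℤ, S.card ≤ k ∧
      ∀ z : ℤ, ∑ i, h i * f.eval (z + a i) = n → z ∈ S := by
  subst hdeg
  exact shifted_polynomial_equation_few_solutions_general
    (Nat.cast_ne_zero.2 (Nat.factorial_ne_zero _)) hh
    (Function.Injective.of_lt_imp_ne ha) (by simpa using huk) n
end

section
/- Let s, k, r be positive integers with r < k, let X ≥ 1 be real, and let z be an integer with 1 ≤ z ≤ X. Set ω_j = 0 for 1 ≤ j < r and ω_j = binom(j,r) for r ≤ j ≤ k. Then I_{s,k,r}(X) is at most the number of integral solutions (u_1,…,u_s,v_1,…,v_s,h) of the system ∑_{i=1}^s (u_i^j − v_i^j) = ω_j·h·z^{j−r} (1 ≤ j ≤ k) with 1 ≤ u_i, v_i ≤ 2X for 1 ≤ i ≤ s and |h| ≤ sX^r. -/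
/-!
Translate a solution `(x, y)` of the incomplete system by `z`. In the binomial expansion of
`∑ ((x i + z) ^ j - (y i + z) ^ j)` the power-sum differences of every degree `m ≠ r` vanish, so
only the term `m = r` survives; it is `binom(j, r) * h * z ^ (j - r)` with
`h = ∑ (x i ^ r - y i ^ r)`. Hence `(x, y) ↦ (x + z, y + z, h)` is an injection into the solutions
of the shifted system.
-/

open Finset

/-- `vinogradovSliceCount s k r X` is the number of integral solutions of the system
`x_1^j + ⋯ + x_s^j = y_1^j + ⋯ + y_s^j` for `1 ≤ j ≤ k`, `j ≠ r`, with `1 ≤ x_i, y_i ≤ X`. -/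
noncomputable def vinogradovSliceCount (s k r : ℕ) (X : ℝ) : ℕ :=
  {p : (Fin s → ℤ) × (Fin s → ℤ) |
      (∀ i, 1 ≤ p.1 i ∧ (p.1 i : ℝ) ≤ X) ∧
      (∀ i, 1 ≤ p.2 i ∧ (p.2 i : ℝ) ≤ X) ∧
      ∀ j ∈ Finset.Icc 1 k, j ≠ r →
        ∑ i, (p.1 i) ^ j = ∑ i, (p.2 i) ^ j}.ncard

section PowerSums

variable {ι R : Type*} (t : Finset ι) (x y : ι → R)

theorem sum_add_pow_sub_add_pow [CommRing R] (z : R) (j : ℕ) :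
    ∑ i ∈ t, ((x i + z) ^ j - (y i + z) ^ j) =
      ∑ m ∈ range (j + 1), j.choose m * (∑ i ∈ t, (x i ^ m - y i ^ m)) * z ^ (j - m) := by
  simp_rw [mul_sum, sum_mul]
  rw [sum_comm]
  refine sum_congr rfl fun i _ ↦ ?_
  rw [add_pow, add_pow, ← sum_sub_distrib]
  exact sum_congr rfl fun m _ ↦ by ring

variable {t x y}

theorem sum_add_pow_sub_add_pow_of_forall_ne [CommRing R] {j r : ℕ}
    (hxy : ∀ m ∈ Icc 1 j, m ≠ r → ∑ i ∈ t, x i ^ m = ∑ i ∈ t, y i ^ m) (z : R) :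
    ∑ i ∈ t, ((x i + z) ^ j - (y i + z) ^ j) =
      j.choose r * (∑ i ∈ t, (x i ^ r - y i ^ r)) * z ^ (j - r) := by
  have sum_sub_eq_zero : ∀ m ∈ range (j + 1), m ≠ r → ∑ i ∈ t, (x i ^ m - y i ^ m) = 0 := by
    intro m hm hmr
    obtain rfl | hm0 := m.eq_zero_or_pos
    · simp
    · rw [sum_sub_distrib, sub_eq_zero]
      exact hxy m (mem_Icc.2 ⟨hm0, mem_range_succ_iff.1 hm⟩) hmr
  rw [sum_add_pow_sub_add_pow]
  refine sum_eq_single r (fun m hm hmr ↦ ?_) fun hr ↦ ?_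
  · rw [sum_sub_eq_zero m hm hmr, mul_zero, zero_mul]
  · rw [Nat.choose_eq_zero_of_lt (by simpa using hr), Nat.cast_zero, zero_mul, zero_mul]

theorem abs_sum_pow_sub_pow_le [CommRing R] [LinearOrder R] [IsStrictOrderedRing R] {b : R}
    (hx : ∀ i ∈ t, x i ∈ Set.Icc 0 b) (hy : ∀ i ∈ t, y i ∈ Set.Icc 0 b) (r : ℕ) :
    |∑ i ∈ t, (x i ^ r - y i ^ r)| ≤ #t * b ^ r :=
  calc
    |∑ i ∈ t, (x i ^ r - y i ^ r)| ≤ ∑ i ∈ t, |x i ^ r - y i ^ r| := abs_sum_le_sum_abs _ _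
    _ ≤ #t • b ^ r := sum_le_card_nsmul _ _ _ fun i hi ↦
      abs_sub_le_of_nonneg_of_le
        (pow_nonneg (hx i hi).1 r) (pow_le_pow_left₀ (hx i hi).1 (hx i hi).2 r)
        (pow_nonneg (hy i hi).1 r) (pow_le_pow_left₀ (hy i hi).1 (hy i hi).2 r)
    _ = #t * b ^ r := nsmul_eq_mul _ _

end PowerSums

section ShiftedSystem

/-- The integral solutions `(u, v, h)` of the system
`∑ i, (u i ^ j - v i ^ j) = ω_j * h * z ^ (j - r)` for `1 ≤ j ≤ k`, with all `u i` and `v i` in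
`[a, b]` and with `|h| ≤ H`. The variables are indexed by an arbitrary finite type `ι`, and the
weight `ω_j` is kept in its two-case form although `binom(j, r)` already vanishes for `j < r`. -/
def shiftedSolutions (ι : Type*) [Fintype ι] (k r : ℕ) (z a : ℤ) (b H : ℝ) :
    Set ((ι → ℤ) × (ι → ℤ) × ℤ) :=
  {q | (∀ i, a ≤ q.1 i ∧ (q.1 i : ℝ) ≤ b) ∧
      (∀ i, a ≤ q.2.1 i ∧ (q.2.1 i : ℝ) ≤ b) ∧
      |(q.2.2 : ℝ)| ≤ H ∧
      ∀ j ∈ Icc 1 k,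
        ∑ i, ((q.1 i) ^ j - (q.2.1 i) ^ j) =
          (if j < r then 0 else (j.choose r : ℤ)) * q.2.2 * z ^ (j - r)}

variable {ι : Type*} [Fintype ι] {k r : ℕ} {a : ℤ} {b : ℝ}

theorem shiftedSolutions_subset {z a' : ℤ} {b' H : ℝ} (ha : a' ≤ a) (hb : b ≤ b') :
    shiftedSolutions ι k r z a b H ⊆ shiftedSolutions ι k r z a' b' H :=
  fun _ ⟨hu, hv, hh, hsys⟩ ↦
    ⟨fun i ↦ ⟨ha.trans (hu i).1, (hu i).2.trans hb⟩,
      fun i ↦ ⟨ha.trans (hv i).1, (hv i).2.trans hb⟩, hh, hsys⟩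

theorem finite_shiftedSolutions {z : ℤ} {H : ℝ} :
    (shiftedSolutions ι k r z a b H).Finite := by
  have finite_box : {u : ι → ℤ | ∀ i, u i ∈ Set.Icc a ⌊b⌋}.Finite :=
    Set.Finite.pi' fun _ ↦ Set.finite_Icc _ _
  have finite_interval : ((↑) ⁻¹' Set.Icc (-H) H : Set ℤ).Finite := by
    rw [Int.preimage_Icc]
    exact Set.finite_Icc _ _
  refine (finite_box.prod (finite_box.prod finite_interval)).subset ?_
  rintro ⟨u, v, h⟩ ⟨hu, hv, hh, -⟩
  exact ⟨fun i ↦ ⟨(hu i).1, Int.le_floor.2 (hu i).2⟩,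
    fun i ↦ ⟨(hv i).1, Int.le_floor.2 (hv i).2⟩, abs_le.1 hh⟩

theorem add_mem_shiftedSolutions {x y : ι → ℤ} (ha : 0 ≤ a)
    (hx : ∀ i, a ≤ x i ∧ (x i : ℝ) ≤ b) (hy : ∀ i, a ≤ y i ∧ (y i : ℝ) ≤ b)
    (hxy : ∀ j ∈ Icc 1 k, j ≠ r → ∑ i, x i ^ j = ∑ i, y i ^ j) (z : ℤ) :
    (fun i ↦ x i + z, fun i ↦ y i + z, ∑ i, (x i ^ r - y i ^ r)) ∈
      shiftedSolutions ι k r z (a + z) (b + z) (Fintype.card ι * b ^ r) := by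
  have translate_bounds {n : ℤ} (hn : a ≤ n ∧ (n : ℝ) ≤ b) :
      a + z ≤ n + z ∧ ((n + z : ℤ) : ℝ) ≤ b + z := by
    push_cast
    exact ⟨by gcongr; exact hn.1, by gcongr; exact hn.2⟩
  have cast_mem_Icc {n : ℤ} (hn : a ≤ n ∧ (n : ℝ) ≤ b) : (n : ℝ) ∈ Set.Icc 0 b :=
    ⟨Int.cast_nonneg (ha.trans hn.1), hn.2⟩
  refine ⟨fun i ↦ translate_bounds (hx i), fun i ↦ translate_bounds (hy i), ?_, fun j hj ↦ ?_⟩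
  · push_cast
    exact abs_sum_pow_sub_pow_le
      (fun i _ ↦ cast_mem_Icc (hx i)) (fun i _ ↦ cast_mem_Icc (hy i)) r
  · have weight_eq : (if j < r then 0 else (j.choose r : ℤ)) = j.choose r :=
      ite_eq_right_iff.2 fun hjr ↦ by rw [Nat.choose_eq_zero_of_lt hjr, Nat.cast_zero]
    rw [weight_eq]
    exact sum_add_pow_sub_add_pow_of_forall_ne
      (fun m hm ↦ hxy m (Icc_subset_Icc_right (mem_Icc.1 hj).2 hm)) z

end ShiftedSystem

theorem count_le_shifted_count_general (s k r : ℕ) (X : ℝ) (z : ℤ) :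
    vinogradovSliceCount s k r X ≤
      (shiftedSolutions (Fin s) k r z (1 + z) (X + z) (s * X ^ r)).ncard := by
  refine Set.ncard_le_ncard_of_injOn
    (fun p ↦ (fun i ↦ p.1 i + z, fun i ↦ p.2 i + z, ∑ i, (p.1 i ^ r - p.2 i ^ r)))
    ?_ ?_ finite_shiftedSolutions
  · rintro ⟨x, y⟩ ⟨hx, hy, hxy⟩
    simpa only [Fintype.card_fin] using add_mem_shiftedSolutions zero_le_one hx hy hxy z
  · rintro ⟨x, y⟩ - ⟨x', y'⟩ - hshift
    obtain ⟨hx, hy, -⟩ := by simpa only [Prod.mk.injEq] using hshift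
    exact Prod.ext (funext fun i ↦ add_right_cancel (congrFun hx i))
      (funext fun i ↦ add_right_cancel (congrFun hy i))

theorem count_le_shifted_count
    (s k r : ℕ) (hs : 1 ≤ s) (hr : 1 ≤ r) (hrk : r < k)
    (X : ℝ) (hX : 1 ≤ X) (z : ℤ) (hz1 : 1 ≤ z) (hzX : (z : ℝ) ≤ X) :
    vinogradovSliceCount s k r X ≤
      {q : (Fin s → ℤ) × (Fin s → ℤ) × ℤ |
        (∀ i, 1 ≤ q.1 i ∧ (q.1 i : ℝ) ≤ 2 * X) ∧
        (∀ i, 1 ≤ q.2.1 i ∧ (q.2.1 i : ℝ) ≤ 2 * X) ∧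
        |(q.2.2 : ℝ)| ≤ (s : ℝ) * X ^ r ∧
        ∀ j ∈ Finset.Icc 1 k,
          ∑ i, ((q.1 i) ^ j - (q.2.1 i) ^ j) =
            (if j < r then 0 else (j.choose r : ℤ)) * q.2.2 * z ^ (j - r)}.ncard :=
  (count_le_shifted_count_general s k r X z).trans <| Set.ncard_le_ncard
    (shiftedSolutions_subset (by lia) (by linarith)) finite_shiftedSolutions
end

section
/- Let s ≥ 1 and r ≥ 1 be integers and let f = (f_1,…,f_{2s−1}) be a well-conditioned (2s−1)-tuple of polynomials with integer coefficients. Then the number of integral solutions (z_1,…,z_{2s},h_1,…,h_{2s}) of the system ∑_{i=1}^{2s} h_i f_j(z_i) = 0 (1 ≤ j ≤ 2s−1), with 1 ≤ z_i ≤ X and |h_i| ≤ X^r for 1 ≤ i ≤ 2s, and which additionally satisfy h_i·f_1(z_i) = 0 for every i with 1 ≤ i ≤ 2s, is ≪ X^{(2s−1)r+1}, with implicit constant depending at most on s, r and the coefficients of f. -/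
open Finset

/-!
Each `i` contributes a pair `(h_i, z_i)` with `h_i = 0` or `z_i` one of the finitely many zeros of
`f_1`, so there are only `O(X + X ^ r) = O(X ^ r)` choices for it. Fix one index `i₀`. Since some
`f_j` does not vanish at `z_{i₀}`, the `j`-th equation determines `h_{i₀}` from everything else.
Hence a solution is determined by `z_{i₀}`, for which there are at most `X` choices, and by the
`2s - 1` remaining pairs.
-/

/-- The solutions `(h, z)` of the system `∑ i, h i * f j (z i) = 0` with `|h i| ≤ H` and
`1 ≤ z i ≤ X` all of whose terms `h i * g (z i)` vanish. The paper's type-`S0` solutions are the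
case where `f` is a tuple of polynomials, `g = f_1` and `H = X ^ r`. -/
def typeS0Solutions {ι κ : Type*} [Fintype ι] (f : κ → ℤ → ℤ) (g : ℤ → ℤ) (H X : ℝ) :
    Set ((ι → ℤ) × (ι → ℤ)) :=
  {p | (∀ i, |(p.1 i : ℝ)| ≤ H) ∧
    (∀ i, 1 ≤ p.2 i ∧ (p.2 i : ℝ) ≤ X) ∧
    (∀ j, ∑ i, p.1 i * f j (p.2 i) = 0) ∧
    (∀ i, p.1 i * g (p.2 i) = 0)}

/-- The pairs `(h, z)` with `|h| ≤ H`, `1 ≤ z ≤ X` and `h * g z = 0`: the possible values of a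
single coordinate pair `(h i, z i)` of a solution in `typeS0Solutions`. -/
noncomputable def typeS0Pairs (g : ℤ → ℤ) (H X : ℝ) : Finset (ℤ × ℤ) :=
  {q ∈ Icc ⌈-H⌉ ⌊H⌋ ×ˢ Icc 1 ⌊X⌋ | q.1 * g q.2 = 0}

theorem mem_typeS0Pairs {g : ℤ → ℤ} {H X : ℝ} {q : ℤ × ℤ} :
    q ∈ typeS0Pairs g H X ↔
      |(q.1 : ℝ)| ≤ H ∧ (1 ≤ q.2 ∧ (q.2 : ℝ) ≤ X) ∧ q.1 * g q.2 = 0 := by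
  simp only [typeS0Pairs, mem_filter, mem_product, mem_Icc, Int.ceil_le, Int.le_floor, abs_le,
    and_assoc]

theorem card_Icc_one_floor_le {R : Type*} [Ring R] [LinearOrder R] [IsStrictOrderedRing R]
    [FloorRing R] {X : R} (hX : 0 ≤ X) : (#(Icc 1 ⌊X⌋) : R) ≤ X := by
  rw [Int.card_Icc, add_sub_cancel_right, Int.floor_toNat]
  exact Nat.floor_le hX

theorem card_Icc_ceil_neg_floor_le {R : Type*} [Ring R] [LinearOrder R] [IsStrictOrderedRing R]
    [FloorRing R] {H : R} (hH : 0 ≤ H) :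
    (#(Icc ⌈-H⌉ ⌊H⌋) : R) ≤ 2 * H + 1 := by
  have hfloor : 0 ≤ ⌊H⌋ := Int.floor_nonneg.2 hH
  have hcard : (#(Icc ⌈-H⌉ ⌊H⌋) : ℤ) = 2 * ⌊H⌋ + 1 := by
    rw [Int.card_Icc, Int.ceil_neg]
    omega
  calc (#(Icc ⌈-H⌉ ⌊H⌋) : R) = 2 * ⌊H⌋ + 1 := mod_cast hcard
    _ ≤ 2 * H + 1 := by gcongr; exact Int.floor_le H

theorem card_typeS0Pairs_le {g : ℤ → ℤ} (hg : {z | g z = 0}.Finite) {H X : ℝ}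
    (hH : 0 ≤ H) (hX : 0 ≤ X) :
    (#(typeS0Pairs g H X) : ℝ) ≤ X + (2 * H + 1) * {z | g z = 0}.ncard := by
  have hsub : typeS0Pairs g H X ⊆
      {0} ×ˢ Icc 1 ⌊X⌋ ∪ Icc ⌈-H⌉ ⌊H⌋ ×ˢ hg.toFinset := by
    rintro ⟨h, z⟩ hq
    obtain ⟨hmem, hmul⟩ := mem_filter.1 hq
    obtain ⟨hh, hz⟩ := mem_product.1 hmem
    rcases mul_eq_zero.1 hmul with h_zero | g_zero
    · exact mem_union_left _ (mk_mem_product (mem_singleton.2 h_zero) hz)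
    · exact mem_union_right _ (mk_mem_product hh (hg.mem_toFinset.2 g_zero))
  calc (#(typeS0Pairs g H X) : ℝ)
      ≤ #(Icc 1 ⌊X⌋) + #(Icc ⌈-H⌉ ⌊H⌋) * {z | g z = 0}.ncard := by
        rw [Set.ncard_eq_toFinset_card _ hg]
        have hcard := (card_le_card hsub).trans (card_union_le _ _)
        rw [card_product, card_product, card_singleton, one_mul] at hcard
        exact mod_cast hcard
    _ ≤ X + (2 * H + 1) * {z | g z = 0}.ncard := by
        gcongr
        · exact card_Icc_one_floor_le hX
        · exact card_Icc_ceil_neg_floor_le hH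

theorem eq_of_eq_off_of_sum_mul_eq {ι R : Type*} [Fintype ι] [NonUnitalNonAssocSemiring R]
    [IsRightCancelAdd R] [IsRightCancelMulZero R] {h h' a : ι → R} {i₀ : ι} (ha : a i₀ ≠ 0)
    (hoff : ∀ i ≠ i₀, h i = h' i) (hsum : ∑ i, h i * a i = ∑ i, h' i * a i) : h = h' := by
  classical
  have hrest : ∑ i : {i // i ≠ i₀}, h i * a i = ∑ i : {i // i ≠ i₀}, h' i * a i :=
    Fintype.sum_congr _ _ fun i ↦ by rw [hoff i i.2]
  rw [Fintype.sum_eq_add_sum_subtype_ne _ i₀, Fintype.sum_eq_add_sum_subtype_ne _ i₀, hrest] at hsum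
  have hi₀ : h i₀ = h' i₀ := mul_right_cancel₀ ha (add_right_cancel hsum)
  funext i
  by_cases hi : i = i₀
  · rw [hi, hi₀]
  · exact hoff i hi

section Solutions

variable {ι κ : Type*} [Fintype ι] {f : κ → ℤ → ℤ} {g : ℤ → ℤ} {H X : ℝ}

theorem injOn_typeS0Solutions (hf : ∀ z, 0 < z → ∃ j, f j z ≠ 0) (i₀ : ι) :
    Set.InjOn (fun p ↦ (p.2 i₀, fun i : {i // i ≠ i₀} ↦ (p.1 i, p.2 i)))
      (typeS0Solutions f g H X) := by
  rintro ⟨h, z⟩ ⟨-, hz, hsys, -⟩ ⟨h', z'⟩ ⟨-, -, hsys', -⟩ heq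
  obtain ⟨hz₀, hpairs⟩ := Prod.mk.inj heq
  have hoff : ∀ i ≠ i₀, h i = h' i ∧ z i = z' i := fun i hi ↦
    Prod.mk.inj (congrFun hpairs ⟨i, hi⟩)
  obtain rfl : z = z' := by
    funext i
    by_cases hi : i = i₀
    · rw [hi]
      exact hz₀
    · exact (hoff i hi).2
  obtain ⟨j, hj⟩ := hf (z i₀) (hz i₀).1
  have hh : h = h' := eq_of_eq_off_of_sum_mul_eq (a := fun i ↦ f j (z i)) hj
    (fun i hi ↦ (hoff i hi).1) ((hsys j).trans (hsys' j).symm)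
  rw [hh]

theorem ncard_typeS0Solutions_le {m : ℕ} (hι : Fintype.card ι = m + 1)
    (hf : ∀ z, 0 < z → ∃ j, f j z ≠ 0) (hg : {z | g z = 0}.Finite) (hH : 0 ≤ H) (hX : 0 ≤ X) :
    ((typeS0Solutions f g H X : Set ((ι → ℤ) × (ι → ℤ))).ncard : ℝ) ≤
      X * (X + (2 * H + 1) * {z | g z = 0}.ncard) ^ m := by
  classical
  obtain ⟨i₀⟩ : Nonempty ι := Fintype.card_pos_iff.1 (by omega)
  let T : Finset (ℤ × ({i // i ≠ i₀} → ℤ × ℤ)) :=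
    Icc 1 ⌊X⌋ ×ˢ Fintype.piFinset fun _ ↦ typeS0Pairs g H X
  have hcover : (typeS0Solutions f g H X : Set ((ι → ℤ) × (ι → ℤ))).ncard ≤ #T := by
    rw [← Set.ncard_coe_finset]
    refine Set.ncard_le_ncard_of_injOn _ ?_ (injOn_typeS0Solutions hf i₀) T.finite_toSet
    rintro p ⟨hh, hz, -, hmul⟩
    refine mk_mem_product (mem_Icc.2 ⟨(hz i₀).1, Int.le_floor.2 (hz i₀).2⟩) ?_
    exact Fintype.mem_piFinset.2 fun i ↦ mem_typeS0Pairs.2 ⟨hh i, hz i, hmul i⟩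
  have hcard : #T = #(Icc 1 ⌊X⌋) * #(typeS0Pairs g H X) ^ m := by
    rw [card_product, Fintype.card_piFinset, prod_const, card_univ, Fintype.card_subtype_compl,
      Fintype.card_subtype_eq, hι, Nat.add_sub_cancel]
  calc ((typeS0Solutions f g H X : Set ((ι → ℤ) × (ι → ℤ))).ncard : ℝ)
      ≤ #(Icc 1 ⌊X⌋) * (#(typeS0Pairs g H X) : ℝ) ^ m := mod_cast hcover.trans_eq hcard
    _ ≤ X * (X + (2 * H + 1) * {z | g z = 0}.ncard) ^ m := by
        gcongr
        · exact card_Icc_one_floor_le hX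
        · exact card_typeS0Pairs_le hg hH hX

theorem count_type_S0_solutions_general {m r : ℕ} (hι : Fintype.card ι = m + 1) (hr : 1 ≤ r)
    (hf : ∀ z, 0 < z → ∃ j, f j z ≠ 0) (hg : {z | g z = 0}.Finite) (hX : 1 ≤ X) :
    ((typeS0Solutions f g (X ^ r) X : Set ((ι → ℤ) × (ι → ℤ))).ncard : ℝ) ≤
      (1 + 3 * {z | g z = 0}.ncard : ℝ) ^ m * X ^ (m * r + 1) := by
  set D : ℝ := ({z | g z = 0}.ncard : ℝ)
  have hX₀ : 0 ≤ X := zero_le_one.trans hX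
  have hXr : X ≤ X ^ r := le_self_pow₀ hX (by omega)
  have hpairs : X + (2 * X ^ r + 1) * D ≤ (1 + 3 * D) * X ^ r :=
    calc X + (2 * X ^ r + 1) * D ≤ X ^ r + (2 * X ^ r + X ^ r) * D := by
          gcongr
          exact hX.trans hXr
      _ = (1 + 3 * D) * X ^ r := by ring
  calc ((typeS0Solutions f g (X ^ r) X : Set ((ι → ℤ) × (ι → ℤ))).ncard : ℝ)
      ≤ X * (X + (2 * X ^ r + 1) * D) ^ m :=
        ncard_typeS0Solutions_le hι hf hg (pow_nonneg hX₀ r) hX₀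
    _ ≤ X * ((1 + 3 * D) * X ^ r) ^ m := by gcongr
    _ = (1 + 3 * D) ^ m * X ^ (m * r + 1) := by rw [mul_pow, ← pow_mul]; ring

end Solutions

theorem count_type_S0_solutions
    (s r : ℕ) (hs : 1 ≤ s) (hr : 1 ≤ r)
    (f : Fin (2 * s - 1) → Polynomial ℤ) (hf : WellConditioned f) :
    ∃ C X₀ : ℝ, ∀ X : ℝ, X₀ ≤ X →
      ({p : (Fin (2 * s) → ℤ) × (Fin (2 * s) → ℤ) |
          (∀ i, |(p.1 i : ℝ)| ≤ X ^ r) ∧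
          (∀ i, 1 ≤ p.2 i ∧ (p.2 i : ℝ) ≤ X) ∧
          (∀ j, ∑ i, p.1 i * (f j).eval (p.2 i) = 0) ∧
          (∀ i, p.1 i * (f ⟨0, by omega⟩).eval (p.2 i) = 0)}.ncard : ℝ) ≤
        C * X ^ ((2 * s - 1) * r + 1) := by
  have hcard : Fintype.card (Fin (2 * s)) = 2 * s - 1 + 1 := by rw [Fintype.card_fin]; omega
  exact ⟨_, 1, fun X ↦ count_type_S0_solutions_general (f := fun j ↦ (f j).eval)
    (g := (f ⟨0, by omega⟩).eval) hcard hr hf.2.2 (Polynomial.finite_setOfPred_isRoot (hf.1 _))⟩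
end

section
/- Let s ≥ 2 and r ≥ 1 be integers, let f = (f_1,…,f_{2s−1}) be a well-conditioned (2s−1)-tuple of polynomials with integer coefficients, and let Ψ ∈ ℤ[w_1,…,w_{2s−1}] be a nonzero polynomial such that Ψ(σ_{1,s−1}(z;h),…,σ_{2s−1,s−1}(z;h)) = 0 identically while Ψ(σ_{1,s}(z;h),…,σ_{2s−1,s}(z;h)) is not the zero polynomial. Then for each ε > 0, the number of integral solutions (z_1,…,z_{2s},h_1,…,h_{2s}) of the system ∑_{i=1}^{2s} h_i f_j(z_i) = 0 (1 ≤ j ≤ 2s−1), with 1 ≤ z_i ≤ X and |h_i| ≤ X^r, for which there exists an s-element subset {i_1 < ⋯ < i_s} of {1,…,2s} with Ψ(σ_{1,s}(z_{i_1},…,z_{i_s};h_{i_1},…,h_{i_s}),…,σ_{2s−1,s}(z_{i_1},…,z_{i_s};h_{i_1},…,h_{i_s})) ≠ 0, is ≪ X^{(r+1)s+ε}, with implicit constant depending at most on s, r, ε, Ψ and the coefficients of f. -/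
open Finset

/-!
Fix all the variables outside an `s`-subset at which `Ψ` does not vanish: this leaves
`X ^ ((r + 1) * s)` choices up to a constant, and the system then prescribes the values
`w_j = σ_{j,s}(z; h)` on the subset. Since `Ψ` vanishes identically on sums with `s - 1` terms,
every weight `h_i` and every difference `z_i - z_k` divides the nonzero integer `Ψ(w)`: deleting
the term `i`, or merging it with the term `k`, changes `Ψ(w)` into `0`. By the divisor bound the
weights and the differences take only `X ^ ε` values up to a constant. Once they are known, `z_1` is
a root of `∑ h_i f_1(x + z_i - z_1) - w_1`, which is not the zero polynomial because `deg f_1 ≥ s`.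
-/

section SigmaVec

open Polynomial

variable {R τ ι κ μ : Type*} [CommRing R] [Fintype ι] [Fintype κ] [Fintype μ]

/-- The value `(σ_j(z; h))_j` of the weighted sums `∑ i, h i * f_j(z i)` at a given point, for
weights and nodes indexed by an arbitrary finite type. -/
def sigmaVec (f : τ → R[X]) (h z : ι → R) : τ → R :=
  fun j ↦ ∑ i, h i * (f j).eval (z i)

theorem sigmaVec_add (f : τ → R[X]) (h h' z : ι → R) :
    sigmaVec f (h + h') z = sigmaVec f h z + sigmaVec f h' z := by
  ext j
  simp [sigmaVec, add_mul, sum_add_distrib]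

theorem sigmaVec_sub (f : τ → R[X]) (h h' z : ι → R) :
    sigmaVec f (h - h') z = sigmaVec f h z - sigmaVec f h' z := by
  ext j
  simp [sigmaVec, sub_mul, sum_sub_distrib]

theorem sigmaVec_single [DecidableEq ι] (f : τ → R[X]) (i : ι) (a : R) (z : ι → R) (j : τ) :
    sigmaVec f (Pi.single i a) z j = a * (f j).eval (z i) := by
  simp [sigmaVec, Pi.single_apply]

theorem sigmaVec_eq_add_of_equiv (e : κ ⊕ μ ≃ ι) (f : τ → R[X]) (h z : ι → R) :
    sigmaVec f h z = sigmaVec f (h ∘ e ∘ Sum.inl) (z ∘ e ∘ Sum.inl) +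
      sigmaVec f (h ∘ e ∘ Sum.inr) (z ∘ e ∘ Sum.inr) := by
  ext j
  simp [sigmaVec, ← e.sum_comp, Fintype.sum_sum_type]

theorem eval_aeval_sigmaPoly {t n : ℕ} (f : Fin t → ℤ[X]) (Ψ : MvPolynomial (Fin t) ℤ)
    (h z : Fin n → ℤ) :
    MvPolynomial.eval (Sum.elim z h) (MvPolynomial.aeval (sigmaPoly f n) Ψ) =
      MvPolynomial.eval (sigmaVec f h z) Ψ := by
  have eval_sigmaPoly (j : Fin t) :
      MvPolynomial.aeval (Sum.elim z h) (sigmaPoly f n j) = sigmaVec f h z j := by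
    simp only [sigmaPoly, sigmaVec, map_sum, map_mul, MvPolynomial.aeval_X, Sum.elim_inr,
      ← aeval_algHom_apply, Sum.elim_inl, coe_aeval_eq_eval]
  rw [← MvPolynomial.coe_aeval_eq_eval, RingHom.coe_coe, ← AlgHom.comp_apply,
    MvPolynomial.comp_aeval]
  simp only [eval_sigmaPoly, MvPolynomial.aeval_eq_eval]

end SigmaVec

section Divisibility

open Polynomial

variable {R τ ι : Type*} [CommRing R] [Fintype ι]

theorem dvd_mvPolynomial_eval_sub_eval (Ψ : MvPolynomial τ R) {d : R} {a b : τ → R}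
    (hab : ∀ j, d ∣ a j - b j) : d ∣ MvPolynomial.eval a Ψ - MvPolynomial.eval b Ψ := by
  rw [← Ideal.mem_span_singleton, ← Ideal.Quotient.eq, MvPolynomial.map_eval,
    MvPolynomial.map_eval]
  congr 2
  ext j
  exact Ideal.Quotient.eq.2 (Ideal.mem_span_singleton.2 (hab j))

/-- `Ψ` vanishes at the weighted sums `sigmaVec f h z` over `ι` whenever one of the weights is zero,
that is, at all weighted sums with fewer than `|ι|` terms. -/
def VanishesOnShorterSums (ι : Type*) [Fintype ι] (f : τ → R[X]) (Ψ : MvPolynomial τ R) : Prop :=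
  ∀ (h z : ι → R) (i : ι), h i = 0 → MvPolynomial.eval (sigmaVec f h z) Ψ = 0

theorem vanishesOnShorterSums_of_aeval_sigmaPoly_eq_zero {t n : ℕ} {f : Fin t → ℤ[X]}
    {Ψ : MvPolynomial (Fin t) ℤ} (hΨ : MvPolynomial.aeval (sigmaPoly f (n - 1)) Ψ = 0) :
    VanishesOnShorterSums (Fin n) f Ψ := by
  intro h z i hi
  obtain ⟨m, rfl⟩ := Nat.exists_eq_succ_of_ne_zero i.pos.ne'
  have drop_term :
      sigmaVec f h z = sigmaVec f (fun l ↦ h (i.succAbove l)) (fun l ↦ z (i.succAbove l)) := by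
    ext j
    simp [sigmaVec, Fin.sum_univ_succAbove _ i, hi]
  rw [drop_term, ← eval_aeval_sigmaPoly]
  simpa using congrArg (MvPolynomial.eval _) hΨ

variable {f : τ → R[X]} {Ψ : MvPolynomial τ R}

theorem VanishesOnShorterSums.weight_dvd (hΨ : VanishesOnShorterSums ι f Ψ) (h z : ι → R) (i : ι) :
    h i ∣ MvPolynomial.eval (sigmaVec f h z) Ψ := by
  classical
  rw [← sub_zero (MvPolynomial.eval _ Ψ), ← hΨ (h - Pi.single i (h i)) z i (by simp)]
  refine dvd_mvPolynomial_eval_sub_eval Ψ fun j ↦ ?_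
  rw [sigmaVec_sub, Pi.sub_apply, sub_sub_cancel, sigmaVec_single]
  exact dvd_mul_right _ _

-- Moving the weight of `i` onto `k` changes each `σ_j` by a multiple of `f_j(z i) - f_j(z k)`.
theorem VanishesOnShorterSums.node_sub_node_dvd (hΨ : VanishesOnShorterSums ι f Ψ) (h z : ι → R)
    {i k : ι} (hik : i ≠ k) : z i - z k ∣ MvPolynomial.eval (sigmaVec f h z) Ψ := by
  classical
  rw [← sub_zero (MvPolynomial.eval _ Ψ),
    ← hΨ (h - Pi.single i (h i) + Pi.single k (h i)) z i (by simp [hik])]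
  refine dvd_mvPolynomial_eval_sub_eval Ψ fun j ↦ ?_
  have change : sigmaVec f h z j - sigmaVec f (h - Pi.single i (h i) + Pi.single k (h i)) z j =
      h i * ((f j).eval (z i) - (f j).eval (z k)) := by
    simp only [sigmaVec_add, sigmaVec_sub, sigmaVec_single, Pi.add_apply, Pi.sub_apply]
    ring
  rw [change]
  exact (sub_dvd_eval_sub _ _ _).mul_left _

theorem VanishesOnShorterSums.weight_ne_zero (hΨ : VanishesOnShorterSums ι f Ψ) {h z : ι → R}
    (hne : MvPolynomial.eval (sigmaVec f h z) Ψ ≠ 0) (i : ι) : h i ≠ 0 :=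
  fun hi ↦ hne (hΨ h z i hi)

theorem VanishesOnShorterSums.node_injective (hΨ : VanishesOnShorterSums ι f Ψ) {h z : ι → R}
    (hne : MvPolynomial.eval (sigmaVec f h z) Ψ ≠ 0) : Function.Injective z := by
  intro i k hz
  by_contra hik
  exact hne (zero_dvd_iff.1 (by simpa [hz] using hΨ.node_sub_node_dvd h z hik))

end Divisibility

section Translates

open Polynomial

variable {R : Type*} [CommRing R] {s : ℕ}

theorem coeff_sum_C_mul_taylor (f : R[X]) (h d : Fin s → R) {m : ℕ} (hm : m ≤ f.natDegree)
    (hmoment : ∀ l < m, ∑ i, h i * d i ^ l = 0) :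
    (∑ i, C (h i) * taylor (d i) f).coeff (f.natDegree - m) =
      f.natDegree.choose (f.natDegree - m) * f.leadingCoeff * ∑ i, h i * d i ^ m := by
  set D := hasseDeriv (f.natDegree - m) f with hD
  have hDdeg : D.natDegree < m + 1 := by
    have := natDegree_hasseDeriv_le f (f.natDegree - m)
    lia
  calc (∑ i, C (h i) * taylor (d i) f).coeff (f.natDegree - m)
      = ∑ i, h i * ∑ l ∈ range (m + 1), D.coeff l * d i ^ l := by
        simp only [finsetSum_coeff, coeff_C_mul, taylor_coeff, ← hD, eval_eq_sum_range' hDdeg]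
    _ = ∑ l ∈ range (m + 1), D.coeff l * ∑ i, h i * d i ^ l := by
        simp only [mul_sum, mul_left_comm]
        exact sum_comm
    _ = D.coeff m * ∑ i, h i * d i ^ m := by
        rw [sum_range_succ, sum_eq_zero, zero_add]
        intro l hl
        rw [hmoment l (mem_range.1 hl), mul_zero]
    _ = _ := by rw [hD, hasseDeriv_coeff, Nat.add_sub_cancel' hm, leadingCoeff]

variable [IsDomain R] [CharZero R]

-- The first nonvanishing moment `∑ i, h i * d i ^ m`, which exists with `m < s` by Vandermonde,
-- is the coefficient of `X ^ (natDegree f - m)` up to a nonzero factor.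
theorem sum_C_mul_taylor_ne_C {f : R[X]} (hf : s ≤ f.natDegree) {h d : Fin s → R} (hh : h ≠ 0)
    (hd : Function.Injective d) (c : R) : ∑ i, C (h i) * taylor (d i) f ≠ C c := by
  intro hconst
  refine hh (Matrix.eq_zero_of_forall_pow_sum_mul_pow_eq_zero hd fun m ↦ ?_)
  obtain ⟨m, hm⟩ := m
  induction m using Nat.strong_induction_on with
  | _ m ih =>
    have hcoeff := coeff_sum_C_mul_taylor f h d (hm.le.trans hf) fun l hl ↦ ih l hl (hl.trans hm)
    rw [hconst, coeff_C_of_ne_zero (by lia)] at hcoeff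
    have hchoose : f.natDegree.choose (f.natDegree - m) ≠ 0 := (Nat.choose_pos (by lia)).ne'
    have hf0 : f ≠ 0 := by
      rintro rfl
      simp only [natDegree_zero] at hf
      lia
    simpa [hchoose, hf0] using hcoeff.symm

theorem card_le_natDegree_of_sum_mul_eval_add_eq {f : R[X]} (hf : s ≤ f.natDegree)
    {h d : Fin s → R} (hh : h ≠ 0) (hd : Function.Injective d) {c : R} {S : Finset R}
    (hS : ∀ x ∈ S, ∑ i, h i * f.eval (x + d i) = c) : #S ≤ f.natDegree := by
  set P := ∑ i, C (h i) * taylor (d i) f - C c with hP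
  have hP0 : P ≠ 0 := sub_ne_zero.2 (sum_C_mul_taylor_ne_C hf hh hd c)
  have hroots : S.val ⊆ P.roots := by
    intro x hx
    rw [mem_roots hP0, IsRoot, hP]
    simp [eval_finsetSum, taylor_eval, hS x hx]
  refine (card_le_degree_of_subset_roots hroots).trans ?_
  rw [hP, natDegree_sub_C]
  exact natDegree_sum_le_of_forall_le _ _ fun i _ ↦
    (natDegree_C_mul_le _ _).trans (natDegree_taylor _ _).le

end Translates

section Fibers

open Polynomial

theorem exists_finset_forall_dvd_mem {N : ℤ} (hN : N ≠ 0) :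
    ∃ D : Finset ℤ, #D ≤ 2 * #N.natAbs.divisors ∧ ∀ a, a ∣ N → a ∈ D := by
  classical
  refine ⟨N.natAbs.divisors.image (↑) ∪ N.natAbs.divisors.image (-↑·), ?_, fun a ha ↦ ?_⟩
  · rw [two_mul]
    exact (card_union_le _ _).trans (add_le_add card_image_le card_image_le)
  · have hmem : a.natAbs ∈ N.natAbs.divisors := by simpa [Int.natAbs_dvd_natAbs, hN] using ha
    rw [mem_union, mem_image, mem_image]
    exact a.natAbs_eq.imp (fun h ↦ ⟨_, hmem, h.symm⟩) fun h ↦ ⟨_, hmem, h.symm⟩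

section FixedDifferences

variable {R τ : Type*} [CommRing R] [IsDomain R] [CharZero R] {s : ℕ} [NeZero s] {f : τ → R[X]}
  {j₀ : τ} {w : τ → R}

-- Given the weights and the differences `z i - z 0`, the node `z 0` is a root of a fixed nonzero
-- polynomial.
theorem card_le_natDegree_of_sigmaVec_eq (hdeg : s ≤ (f j₀).natDegree) {h d : Fin s → R}
    (hh : h ≠ 0) (hd : Function.Injective d) {Z : Finset (Fin s → R)}
    (hZd : ∀ z ∈ Z, ∀ i, z i - z 0 = d i) (hZ : ∀ z ∈ Z, sigmaVec f h z = w) :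
    #Z ≤ (f j₀).natDegree := by
  classical
  have hnode : ∀ z ∈ Z, ∀ i, z i = z 0 + d i := fun z hz i ↦ by rw [← hZd z hz i]; ring
  have hinj : Set.InjOn (fun z : Fin s → R ↦ z 0) Z := fun z hz z' hz' h0 ↦ funext fun i ↦ by
    rw [hnode z hz, hnode z' hz', show z 0 = z' 0 from h0]
  rw [← card_image_of_injOn hinj]
  refine card_le_natDegree_of_sum_mul_eval_add_eq hdeg hh hd (c := w j₀) ?_
  simp only [forall_mem_image]
  intro z hz
  simp only [← hnode z hz, ← hZ z hz, sigmaVec]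

theorem VanishesOnShorterSums.card_le_natDegree {Ψ : MvPolynomial τ R}
    (hΨ : VanishesOnShorterSums (Fin s) f Ψ) (hdeg : s ≤ (f j₀).natDegree)
    (hw : MvPolynomial.eval w Ψ ≠ 0) {h d : Fin s → R} {Z : Finset (Fin s → R)}
    (hZd : ∀ z ∈ Z, ∀ i, z i - z 0 = d i) (hZ : ∀ z ∈ Z, sigmaVec f h z = w) :
    #Z ≤ (f j₀).natDegree := by
  rcases Z.eq_empty_or_nonempty with rfl | ⟨z, hz⟩
  · simp
  rw [← hZ z hz] at hw
  have hh : h ≠ 0 := fun h0 ↦ hΨ.weight_ne_zero hw 0 (congrFun h0 0)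
  have hd : Function.Injective d := fun i k hik ↦ hΨ.node_injective hw
    (sub_left_injective ((hZd z hz i).trans (hik.trans (hZd z hz k).symm)))
  exact card_le_natDegree_of_sigmaVec_eq hdeg hh hd hZd hZ

end FixedDifferences

theorem VanishesOnShorterSums.card_fiber_le {τ : Type*} {s : ℕ} [NeZero s] {f : τ → ℤ[X]}
    {Ψ : MvPolynomial τ ℤ} (hΨ : VanishesOnShorterSums (Fin s) f Ψ) {j₀ : τ}
    (hdeg : s ≤ (f j₀).natDegree) {w : τ → ℤ} (hw : MvPolynomial.eval w Ψ ≠ 0)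
    {F : Finset ((Fin s → ℤ) × (Fin s → ℤ))} (hF : ∀ q ∈ F, sigmaVec f q.1 q.2 = w) :
    #F ≤ (f j₀).natDegree *
      (2 * #(MvPolynomial.eval w Ψ).natAbs.divisors + 1) ^ (2 * s) := by
  classical
  obtain ⟨D, hDcard, hD⟩ := exists_finset_forall_dvd_mem hw
  set B := Fintype.piFinset fun _ : Fin s ↦ insert 0 D with hB
  have hBcard : #(B ×ˢ B) ≤ (2 * #(MvPolynomial.eval w Ψ).natAbs.divisors + 1) ^ (2 * s) := by
    rw [card_product, hB, Fintype.card_piFinset_const, ← pow_add, ← two_mul]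
    exact Nat.pow_le_pow_left ((card_insert_le _ _).trans (by lia)) _
  have hmaps : ∀ q ∈ F, (q.1, fun i ↦ q.2 i - q.2 0) ∈ B ×ˢ B := by
    intro q hq
    simp only [hB, mem_product, Fintype.mem_piFinset]
    refine ⟨fun i ↦ mem_insert_of_mem (hD _ ?_), fun i ↦ ?_⟩
    · exact hF q hq ▸ hΨ.weight_dvd q.1 q.2 i
    · rcases eq_or_ne i 0 with rfl | hi
      · simp
      · exact mem_insert_of_mem (hD _ (hF q hq ▸ hΨ.node_sub_node_dvd q.1 q.2 hi))
  refine (card_le_mul_card_image_of_maps_to hmaps (f j₀).natDegree ?_).trans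
    (Nat.mul_le_mul_left _ hBcard)
  rintro ⟨h, d⟩ -
  have hmem : ∀ q ∈ F.filter fun q ↦ (q.1, fun i ↦ q.2 i - q.2 0) = (h, d),
      sigmaVec f h q.2 = w ∧ q.1 = h ∧ ∀ i, q.2 i - q.2 0 = d i := by
    rintro ⟨h, z⟩ hq
    obtain ⟨hqF, rfl, hqd⟩ := by simpa only [mem_filter, Prod.mk.injEq] using hq
    exact ⟨hF _ hqF, rfl, congrFun hqd⟩
  rw [← card_image_of_injOn (f := Prod.snd) fun q hq q' hq' hz ↦
    Prod.ext ((hmem q hq).2.1.trans (hmem q' hq').2.1.symm) hz]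
  exact hΨ.card_le_natDegree hdeg hw (forall_mem_image.2 fun q hq ↦ (hmem q hq).2.2)
    (forall_mem_image.2 fun q hq ↦ (hmem q hq).1)

end Fibers

section DivisorBound

open Real

theorem natCast_add_one_le_rpow {δ x : ℝ} (hx : 0 ≤ x) (hxδ : 2 ≤ x ^ δ) (a : ℕ) :
    (a : ℝ) + 1 ≤ (x ^ a) ^ δ := by
  calc (a : ℝ) + 1 ≤ (2 : ℝ) ^ a := by exact_mod_cast Nat.lt_two_pow_self
    _ ≤ (x ^ δ) ^ a := by gcongr
    _ = (x ^ a) ^ δ := by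
        rw [← rpow_natCast, ← rpow_natCast, ← rpow_mul hx, ← rpow_mul hx, mul_comm]

theorem natCast_add_one_le_mul_rpow {δ M x : ℝ} (hδ : 0 ≤ δ) (hM : 1 ≤ M)
    (hMδ : 1 ≤ M * (δ * log 2)) (hx : 2 ≤ x) (a : ℕ) : (a : ℝ) + 1 ≤ M * (x ^ a) ^ δ := by
  have hbase : 1 + a * (δ * log 2) ≤ (x ^ a) ^ δ :=
    calc 1 + a * (δ * log 2) ≤ exp (a * (δ * log 2)) := by
          rw [add_comm]
          exact add_one_le_exp _
      _ = ((2 : ℝ) ^ a) ^ δ := by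
          rw [rpow_def_of_pos (by positivity), log_pow]
          ring_nf
      _ ≤ (x ^ a) ^ δ := by gcongr
  calc (a : ℝ) + 1 ≤ M + a * (M * (δ * log 2)) := by
        nlinarith [mul_le_mul_of_nonneg_left hMδ a.cast_nonneg]
    _ = M * (1 + a * (δ * log 2)) := by ring
    _ ≤ M * (x ^ a) ^ δ := by gcongr

-- In `d(n) / n ^ δ = ∏ (a + 1) / p ^ (a * δ)` only the primes `p < 2 ^ (1 / δ)` can contribute a
-- factor exceeding `1`, and each of these factors is bounded.
theorem exists_card_divisors_le_mul_rpow {δ : ℝ} (hδ : 0 < δ) :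
    ∃ C : ℝ, 0 ≤ C ∧ ∀ n : ℕ, n ≠ 0 → (#n.divisors : ℝ) ≤ C * (n : ℝ) ^ δ := by
  set M : ℝ := max 1 (1 / (δ * log 2))
  have hM : 1 ≤ M := le_max_left _ _
  have hMδ : 1 ≤ M * (δ * log 2) :=
    (div_le_iff₀ (mul_pos hδ (log_pos one_lt_two))).1 (le_max_right _ _)
  set P : ℕ := ⌈(2 : ℝ) ^ (1 / δ)⌉₊
  refine ⟨M ^ P, by positivity, fun n hn ↦ ?_⟩
  have hlocal : ∀ p ∈ n.primeFactors, (n.factorization p : ℝ) + 1 ≤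
      (if p < P then M else 1) * ((p : ℝ) ^ n.factorization p) ^ δ := by
    intro p hp
    have hp2 : (2 : ℝ) ≤ p := by exact_mod_cast (Nat.prime_of_mem_primeFactors hp).two_le
    split_ifs with hpP
    · exact natCast_add_one_le_mul_rpow hδ.le hM hMδ hp2 _
    · have hroot : (2 : ℝ) ^ δ⁻¹ ≤ p := by simpa [P] using hpP
      rw [one_mul]
      exact natCast_add_one_le_rpow p.cast_nonneg
        ((rpow_inv_le_iff_of_pos zero_le_two p.cast_nonneg hδ).1 hroot) _
  have hsmall : ∏ p ∈ n.primeFactors, (if p < P then M else 1) ≤ M ^ P := by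
    rw [prod_ite, prod_const, prod_const_one, mul_one]
    refine pow_le_pow_right₀ hM ((card_le_card fun p hp ↦ ?_).trans (card_range P).le)
    exact mem_range.2 (mem_filter.1 hp).2
  have hfactor : ∏ p ∈ n.primeFactors, ((p : ℝ) ^ n.factorization p) ^ δ = (n : ℝ) ^ δ := by
    rw [finsetProd_rpow _ _ fun p _ ↦ by positivity]
    exact_mod_cast congrArg (fun k : ℕ ↦ (k : ℝ) ^ δ) (Nat.prod_factorization_pow_eq_self hn)
  calc (#n.divisors : ℝ) = ∏ p ∈ n.primeFactors, ((n.factorization p : ℝ) + 1) := by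
        rw [Nat.card_divisors hn]
        push_cast
        rfl
    _ ≤ ∏ p ∈ n.primeFactors, (if p < P then M else 1) * ((p : ℝ) ^ n.factorization p) ^ δ :=
        prod_le_prod (fun _ _ ↦ by positivity) hlocal
    _ ≤ M ^ P * (n : ℝ) ^ δ := by
        rw [prod_mul_distrib, hfactor]
        gcongr

theorem exists_abs_mvPolynomial_eval_le {σ : Type*} (q : MvPolynomial σ ℤ) :
    ∃ (C : ℝ) (A : ℕ), 0 ≤ C ∧ ∀ (Y : ℝ) (x : σ → ℤ), 1 ≤ Y → (∀ i, |(x i : ℝ)| ≤ Y) →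
      |(MvPolynomial.eval x q : ℝ)| ≤ C * Y ^ A := by
  induction q using MvPolynomial.induction_on with
  | C c => exact ⟨|(c : ℝ)|, 0, abs_nonneg _, fun _ _ _ _ ↦ by simp⟩
  | add p q hp hq =>
    obtain ⟨C, A, hC, hpY⟩ := hp
    obtain ⟨D, B, hD, hqY⟩ := hq
    refine ⟨C + D, A + B, by positivity, fun Y x hY hx ↦ ?_⟩
    rw [map_add, Int.cast_add, add_mul]
    refine (abs_add_le _ _).trans (add_le_add ((hpY Y x hY hx).trans ?_) ((hqY Y x hY hx).trans ?_))
    · gcongr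
      exact A.le_add_right B
    · gcongr
      exact B.le_add_left A
  | mul_X p i hp =>
    obtain ⟨C, A, hC, hpY⟩ := hp
    refine ⟨C, A + 1, hC, fun Y x hY hx ↦ ?_⟩
    rw [map_mul, MvPolynomial.eval_X, Int.cast_mul, abs_mul, pow_succ, ← mul_assoc]
    exact mul_le_mul (hpY Y x hY hx) (hx i) (abs_nonneg _) (by positivity)

theorem exists_card_divisors_mvPolynomial_eval_le {σ : Type*} (q : MvPolynomial σ ℤ) {ε : ℝ}
    (hε : 0 < ε) :
    ∃ C : ℝ, 0 ≤ C ∧ ∀ (Y : ℝ) (x : σ → ℤ), 1 ≤ Y → (∀ i, |(x i : ℝ)| ≤ Y) →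
      (#(MvPolynomial.eval x q).natAbs.divisors : ℝ) ≤ C * Y ^ ε := by
  obtain ⟨B, A, hB, hgrowth⟩ := exists_abs_mvPolynomial_eval_le q
  set δ : ℝ := ε / (A + 1)
  have hδ : 0 < δ := by positivity
  have hAδ : A * δ ≤ ε := by
    rw [mul_div_assoc', div_le_iff₀ (by positivity)]
    nlinarith
  obtain ⟨D, hD, hdivisors⟩ := exists_card_divisors_le_mul_rpow hδ
  refine ⟨D * B ^ δ, by positivity, fun Y x hY hx ↦ ?_⟩
  set N := MvPolynomial.eval x q
  rcases eq_or_ne N 0 with hN | hN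
  · simp only [hN, Int.natAbs_zero, Nat.divisors_zero, card_empty, Nat.cast_zero]
    positivity
  calc (#N.natAbs.divisors : ℝ) ≤ D * (N.natAbs : ℝ) ^ δ := hdivisors _ (Int.natAbs_ne_zero.2 hN)
    _ ≤ D * (B * Y ^ A) ^ δ := by
        gcongr
        simpa using hgrowth Y x hY hx
    _ = D * B ^ δ * Y ^ (A * δ) := by
        rw [mul_rpow hB (by positivity), ← rpow_natCast_mul (by positivity), mul_assoc]
    _ ≤ D * B ^ δ * Y ^ ε := by gcongr

end DivisorBound

section Solutions

open Polynomial

theorem exists_equiv_sum_fin_apply_inl {ι : Type*} [Fintype ι] {s n : ℕ}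
    (hι : Fintype.card ι = s + n) {g : Fin s → ι} (hg : Function.Injective g) :
    ∃ e : Fin s ⊕ Fin n ≃ ι, ∀ l, e (Sum.inl l) = g l := by
  classical
  have hcompl : Fintype.card ↑(Set.range g)ᶜ = n := by
    rw [Fintype.card_compl_set, Set.card_range_of_injective hg, Fintype.card_fin, hι,
      Nat.add_sub_cancel_left]
  exact ⟨((Equiv.ofInjective g hg).sumCongr (Fintype.equivFinOfCardEq hcompl).symm).trans
    (Equiv.Set.sumCompl _), fun l ↦ rfl⟩

theorem eq_of_comp_inl_eq_of_comp_inr {α ι κ μ : Type*} (e : κ ⊕ μ ≃ ι) {u v : ι → α}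
    (hl : u ∘ e ∘ Sum.inl = v ∘ e ∘ Sum.inl) (hr : u ∘ e ∘ Sum.inr = v ∘ e ∘ Sum.inr) : u = v := by
  ext i
  obtain ⟨i | i, rfl⟩ := e.surjective i
  exacts [congrFun hl i, congrFun hr i]

theorem card_le_of_sigmaVec_eq_zero {R τ ι κ μ : Type*} [CommRing R] [Fintype ι] [Fintype κ]
    [Fintype μ] (e : κ ⊕ μ ≃ ι) {f : τ → R[X]} {F : Finset ((ι → R) × (ι → R))} {I J : Finset R}
    (hI : ∀ p ∈ F, ∀ i, p.1 i ∈ I) (hJ : ∀ p ∈ F, ∀ i, p.2 i ∈ J)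
    (hF : ∀ p ∈ F, sigmaVec f p.1 p.2 = 0) {M : ℕ}
    (hM : ∀ p ∈ F, ∀ E : Finset ((κ → R) × (κ → R)),
      (∀ q ∈ E, sigmaVec f q.1 q.2 = sigmaVec f (p.1 ∘ e ∘ Sum.inl) (p.2 ∘ e ∘ Sum.inl)) →
        #E ≤ M) :
    #F ≤ M * (#I ^ Fintype.card μ * #J ^ Fintype.card μ) := by
  classical
  set rest : (ι → R) × (ι → R) → (μ → R) × (μ → R) :=
    fun p ↦ (p.1 ∘ e ∘ Sum.inr, p.2 ∘ e ∘ Sum.inr) with hrest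
  set main : (ι → R) × (ι → R) → (κ → R) × (κ → R) :=
    fun p ↦ (p.1 ∘ e ∘ Sum.inl, p.2 ∘ e ∘ Sum.inl) with hmain
  have hmaps : ∀ p ∈ F, rest p ∈
      (Fintype.piFinset fun _ : μ ↦ I) ×ˢ (Fintype.piFinset fun _ : μ ↦ J) := by
    intro p hp
    simp only [hrest, mem_product, Fintype.mem_piFinset]
    exact ⟨fun _ ↦ hI p hp _, fun _ ↦ hJ p hp _⟩
  have hmain_eq : ∀ p ∈ F, sigmaVec f (main p).1 (main p).2 =
      -sigmaVec f (rest p).1 (rest p).2 := fun p hp ↦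
    eq_neg_of_add_eq_zero_left ((sigmaVec_eq_add_of_equiv e f p.1 p.2).symm.trans (hF p hp))
  have hinj : ∀ p p', main p = main p' → rest p = rest p' → p = p' := by
    simp only [hmain, hrest, Prod.mk.injEq]
    exact fun p p' hl hr ↦ Prod.ext
      (eq_of_comp_inl_eq_of_comp_inr e hl.1 hr.1) (eq_of_comp_inl_eq_of_comp_inr e hl.2 hr.2)
  refine (card_le_mul_card_image_of_maps_to hmaps M fun b _ ↦ ?_).trans_eq ?_
  · rcases {p ∈ F | rest p = b}.eq_empty_or_nonempty with hEmpty | ⟨p₀, hp₀⟩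
    · simp [hEmpty]
    rw [mem_filter] at hp₀
    rw [← card_image_of_injOn (f := main) fun p hp p' hp' h ↦
      hinj p p' h ((mem_filter.1 hp).2.trans (mem_filter.1 hp').2.symm)]
    refine hM p₀ hp₀.1 _ ?_
    simp only [forall_mem_image, mem_filter]
    rintro p ⟨hp, hpb⟩
    rw [hmain_eq p hp, hpb, ← hp₀.2]
    exact (hmain_eq p₀ hp₀.1).symm
  · simp [Fintype.card_piFinset]

variable {t s n : ℕ} {ι : Type*} [Fintype ι]

/-- The solutions of type `S_s` of the system `∑ i, h i * f_j(z i) = 0`, as pairs `(h, z)` with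
`|h i| ≤ H` and `|z i| ≤ Z`: those for which `Ψ` does not vanish at the partial sums over some `s`
of the indices, listed by `g`. -/
def typeSolutions (ι : Type*) [Fintype ι] (s : ℕ) (f : Fin t → ℤ[X])
    (Ψ : MvPolynomial (Fin t) ℤ) (H Z : ℝ) : Set ((ι → ℤ) × (ι → ℤ)) :=
  {p | (∀ i, |(p.1 i : ℝ)| ≤ H) ∧ (∀ i, |(p.2 i : ℝ)| ≤ Z) ∧ sigmaVec f p.1 p.2 = 0 ∧
    ∃ g : Fin s → ι, Function.Injective g ∧
      MvPolynomial.eval (sigmaVec f (p.1 ∘ g) (p.2 ∘ g)) Ψ ≠ 0}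

theorem mem_Icc_ceil_neg_floor {B : ℝ} {a : ℤ} : a ∈ Icc ⌈-B⌉ ⌊B⌋ ↔ |(a : ℝ)| ≤ B := by
  rw [mem_Icc, Int.ceil_le, Int.le_floor, abs_le]

theorem card_Icc_ceil_neg_floor_le_s13 {B : ℝ} (hB : 1 ≤ B) : (#(Icc ⌈-B⌉ ⌊B⌋) : ℝ) ≤ 3 * B := by
  have hfloor : 0 ≤ ⌊B⌋ := Int.floor_nonneg.2 (by linarith)
  have hcard : (#(Icc ⌈-B⌉ ⌊B⌋) : ℤ) = 2 * ⌊B⌋ + 1 := by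
    rw [Int.card_Icc, Int.ceil_neg, Int.toNat_of_nonneg (by lia)]
    ring
  have hcast : (#(Icc ⌈-B⌉ ⌊B⌋) : ℝ) = 2 * (⌊B⌋ : ℝ) + 1 := by exact_mod_cast hcard
  linarith [Int.floor_le B]

theorem finite_typeSolutions (f : Fin t → ℤ[X]) (Ψ : MvPolynomial (Fin t) ℤ) (H Z : ℝ) :
    (typeSolutions ι s f Ψ H Z).Finite := by
  classical
  refine (finite_toSet ((Fintype.piFinset fun _ : ι ↦ Icc ⌈-H⌉ ⌊H⌋) ×ˢ
    (Fintype.piFinset fun _ : ι ↦ Icc ⌈-Z⌉ ⌊Z⌋))).subset fun p hp ↦ ?_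
  simp only [mem_coe, mem_product, Fintype.mem_piFinset, mem_Icc_ceil_neg_floor]
  exact ⟨hp.1, hp.2.1⟩

theorem ncard_typeSolutions_le (hι : Fintype.card ι = s + n) (hs : 0 < s) {f : Fin t → ℤ[X]}
    {Ψ : MvPolynomial (Fin t) ℤ} (hΨ : VanishesOnShorterSums (Fin s) f Ψ) {j₀ : Fin t}
    (hdeg : s ≤ (f j₀).natDegree) {H Z : ℝ} {V : ℕ}
    (hV : ∀ h z : Fin s → ℤ, (∀ l, |(h l : ℝ)| ≤ H) → (∀ l, |(z l : ℝ)| ≤ Z) →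
      #(MvPolynomial.eval (sigmaVec f h z) Ψ).natAbs.divisors ≤ V) :
    (typeSolutions ι s f Ψ H Z).ncard ≤ Fintype.card (Fin s → ι) *
      ((f j₀).natDegree * (2 * V + 1) ^ (2 * s) * (#(Icc ⌈-H⌉ ⌊H⌋) ^ n * #(Icc ⌈-Z⌉ ⌊Z⌋) ^ n)) := by
  classical
  have : NeZero s := ⟨hs.ne'⟩
  set S := (finite_typeSolutions (s := s) (ι := ι) f Ψ H Z).toFinset
  have hS : ∀ p ∈ S, p ∈ typeSolutions ι s f Ψ H Z := fun p ↦ (Set.Finite.mem_toFinset _).1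
  set piece : (Fin s → ι) → Finset ((ι → ℤ) × (ι → ℤ)) := fun g ↦ {p ∈ S |
    Function.Injective g ∧ MvPolynomial.eval (sigmaVec f (p.1 ∘ g) (p.2 ∘ g)) Ψ ≠ 0} with hpiece
  have hcover : S ⊆ univ.biUnion piece := by
    intro p hp
    obtain ⟨g, hg⟩ := (hS p hp).2.2.2
    exact mem_biUnion.2 ⟨g, mem_univ g, mem_filter.2 ⟨hp, hg⟩⟩
  rw [Set.ncard_eq_toFinset_card _ (finite_typeSolutions f Ψ H Z)]
  refine (card_le_card hcover).trans (card_biUnion_le_card_mul _ _ _ fun g _ ↦ ?_)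
  by_cases hg : Function.Injective g
  swap
  · simp [hpiece, hg]
  obtain ⟨e, he⟩ := exists_equiv_sum_fin_apply_inl hι hg
  obtain rfl : e ∘ Sum.inl = g := funext he
  have hmem : ∀ p ∈ piece (e ∘ Sum.inl), p ∈ typeSolutions ι s f Ψ H Z ∧
      MvPolynomial.eval (sigmaVec f (p.1 ∘ e ∘ Sum.inl) (p.2 ∘ e ∘ Sum.inl)) Ψ ≠ 0 := fun p hp ↦
    (mem_filter.1 hp).imp (hS p) And.right
  refine (card_le_of_sigmaVec_eq_zero e
    (fun p hp i ↦ mem_Icc_ceil_neg_floor.2 ((hmem p hp).1.1 i))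
    (fun p hp i ↦ mem_Icc_ceil_neg_floor.2 ((hmem p hp).1.2.1 i))
    (fun p hp ↦ (hmem p hp).1.2.2.1) fun p hp E hE ↦ ?_).trans_eq (by rw [Fintype.card_fin])
  refine (hΨ.card_fiber_le hdeg (hmem p hp).2 hE).trans ?_
  gcongr
  exact hV _ _ (fun l ↦ (hmem p hp).1.1 _) fun l ↦ (hmem p hp).1.2.1 _

theorem exists_card_divisors_eval_sigmaVec_le (s r : ℕ) (f : Fin t → ℤ[X])
    (Ψ : MvPolynomial (Fin t) ℤ) {ε : ℝ} (hε : 0 < ε) :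
    ∃ C : ℝ, 0 ≤ C ∧ ∀ (X : ℝ) (h z : Fin s → ℤ), 1 ≤ X → (∀ l, |(h l : ℝ)| ≤ X ^ r) →
      (∀ l, |(z l : ℝ)| ≤ X) →
        (#(MvPolynomial.eval (sigmaVec f h z) Ψ).natAbs.divisors : ℝ) ≤ C * X ^ ε := by
  obtain ⟨C, hC, hdivisors⟩ := exists_card_divisors_mvPolynomial_eval_le
    (MvPolynomial.aeval (sigmaPoly f s) Ψ) (ε := ε / (r + 1 : ℕ)) (by positivity)
  refine ⟨C, hC, fun X h z hX hh hz ↦ ?_⟩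
  have hpow : (X ^ (r + 1)) ^ (ε / (r + 1 : ℕ)) = X ^ ε := by
    rw [← Real.rpow_natCast_mul (by positivity), mul_div_cancel₀ _ (by positivity)]
  rw [← eval_aeval_sigmaPoly, ← hpow]
  refine hdivisors _ _ (one_le_pow₀ hX) ?_
  rintro (l | l)
  · exact (hz l).trans (le_self_pow₀ hX r.succ_ne_zero)
  · exact (hh l).trans (pow_le_pow_right₀ hX r.le_succ)

theorem rpow_natCast_add_one_mul_natCast_add {x : ℝ} (hx : 0 < x) (r n : ℕ) (ε : ℝ) :
    x ^ (((r : ℝ) + 1) * n + ε) = (x ^ r) ^ n * x ^ n * x ^ ε := by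
  rw [Real.rpow_add hx, ← mul_pow, ← pow_succ, ← pow_mul, ← Real.rpow_natCast]
  push_cast
  rfl

theorem count_type_Ss_solutions_general (hι : Fintype.card ι = s + n) (hs : 0 < s) (r : ℕ)
    {f : Fin t → ℤ[X]} {j₀ : Fin t} (hdeg : s ≤ (f j₀).natDegree) {Ψ : MvPolynomial (Fin t) ℤ}
    (hvanish : MvPolynomial.aeval (sigmaPoly f (s - 1)) Ψ = 0) {ε : ℝ} (hε : 0 < ε) :
    ∃ C : ℝ, ∀ X : ℝ, 1 ≤ X →
      ((typeSolutions ι s f Ψ (X ^ r) X).ncard : ℝ) ≤ C * X ^ (((r : ℝ) + 1) * n + ε) := by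
  obtain ⟨C, hC, hdivisors⟩ :=
    exists_card_divisors_eval_sigmaVec_le s r f Ψ (ε := ε / (2 * s : ℕ)) (by positivity)
  set k := (f j₀).natDegree
  refine ⟨Fintype.card (Fin s → ι) * (k * (2 * C + 1) ^ (2 * s) * (3 ^ n * 3 ^ n)),
    fun X hX ↦ ?_⟩
  have hX0 : 0 < X := by linarith
  have hXr : 1 ≤ X ^ r := one_le_pow₀ hX
  set W : ℝ := X ^ (ε / (2 * s : ℕ)) with hWdef
  have hW : 1 ≤ W := Real.one_le_rpow hX (by positivity)
  have hWpow : W ^ (2 * s) = X ^ ε := by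
    rw [hWdef, ← Real.rpow_mul_natCast hX0.le, div_mul_cancel₀ _ (by positivity)]
  set V : ℕ := ⌊C * W⌋₊
  have hV : 2 * (V : ℝ) + 1 ≤ (2 * C + 1) * W := by
    have : (V : ℝ) ≤ C * W := Nat.floor_le (by positivity)
    linarith
  have hcount := ncard_typeSolutions_le hι hs
    (vanishesOnShorterSums_of_aeval_sigmaPoly_eq_zero hvanish) hdeg
    fun h z hh hz ↦ Nat.le_floor (hdivisors X h z hX hh hz)
  calc ((typeSolutions ι s f Ψ (X ^ r) X).ncard : ℝ)
      ≤ Fintype.card (Fin s → ι) *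
        (k * (2 * V + 1) ^ (2 * s) * (#(Icc ⌈-X ^ r⌉ ⌊X ^ r⌋) ^ n * #(Icc ⌈-X⌉ ⌊X⌋) ^ n)) := by
        exact_mod_cast hcount
    _ ≤ Fintype.card (Fin s → ι) *
        (k * ((2 * C + 1) * W) ^ (2 * s) * ((3 * X ^ r) ^ n * (3 * X) ^ n)) := by
        gcongr
        exacts [card_Icc_ceil_neg_floor_le_s13 hXr, card_Icc_ceil_neg_floor_le_s13 hX]
    _ = _ := by
        rw [rpow_natCast_add_one_mul_natCast_add hX0, mul_pow, mul_pow, mul_pow, hWpow]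
        ring

theorem sub_le_apply_of_strictAnti {k : Fin t → ℕ} (hk : StrictAnti k) (j : Fin t) :
    t - 1 - j ≤ k j := by
  obtain ⟨j, hj⟩ := j
  induction hm : t - 1 - j generalizing j with
  | zero => exact Nat.zero_le _
  | succ m ih =>
    have hlt : k ⟨j + 1, by lia⟩ < k ⟨j, hj⟩ := hk (Fin.mk_lt_mk.2 j.lt_succ_self)
    have hle := ih (j + 1) (by lia) (by lia)
    lia

theorem WellConditioned.strictAnti_natDegree {f : Fin t → ℤ[X]} (hf : WellConditioned f) :
    StrictAnti fun j ↦ (f j).natDegree :=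
  fun i j hij ↦ hf.2.1 i j hij

end Solutions

theorem count_type_Ss_solutions
    (s r : ℕ) (hs : 2 ≤ s) (hr : 1 ≤ r)
    (f : Fin (2 * s - 1) → Polynomial ℤ) (hf : WellConditioned f)
    (Ψ : MvPolynomial (Fin (2 * s - 1)) ℤ) (hΨ : Ψ ≠ 0)
    (hvanish : MvPolynomial.aeval (fun j => sigmaPoly f (s - 1) j) Ψ = 0)
    (hnonvanish : MvPolynomial.aeval (fun j => sigmaPoly f s j) Ψ ≠ 0)
    (ε : ℝ) (hε : 0 < ε) :
    ∃ C X₀ : ℝ, ∀ X : ℝ, X₀ ≤ X →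
      ({p : (Fin (2 * s) → ℤ) × (Fin (2 * s) → ℤ) |
          (∀ i, |(p.1 i : ℝ)| ≤ X ^ r) ∧
          (∀ i, 1 ≤ p.2 i ∧ (p.2 i : ℝ) ≤ X) ∧
          (∀ j, ∑ i, p.1 i * (f j).eval (p.2 i) = 0) ∧
          (∃ g : Fin s → Fin (2 * s), StrictMono g ∧
            MvPolynomial.eval
              (fun j => ∑ l : Fin s, p.1 (g l) * (f j).eval (p.2 (g l))) Ψ ≠ 0)}.ncard : ℝ) ≤
        C * X ^ (((r : ℝ) + 1) * (s : ℝ) + ε) := by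
  have hdeg : s ≤ (f ⟨0, by lia⟩).natDegree :=
    le_trans (by lia) (sub_le_apply_of_strictAnti hf.strictAnti_natDegree ⟨0, by lia⟩)
  obtain ⟨C, hC⟩ := count_type_Ss_solutions_general (ι := Fin (2 * s)) (n := s)
    (by rw [Fintype.card_fin, two_mul]) (by lia) r hdeg hvanish hε
  refine ⟨C, 1, fun X hX ↦ le_trans (Nat.cast_le.2 (Set.ncard_le_ncard ?_
    (finite_typeSolutions f Ψ (X ^ r) X))) (hC X hX)⟩
  rintro p ⟨hh, hz, hsys, g, hg, hne⟩
  refine ⟨hh, fun i ↦ ?_, funext hsys, g, hg.injective, hne⟩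
  rw [abs_of_nonneg (by exact_mod_cast zero_le_one.trans (hz i).1)]
  exact (hz i).2
end

section
/- Writing s_j = h_1 z_1^j + h_2 z_2^j + h_3 z_3^j for 0 ≤ j ≤ 4, there exists a polynomial F ∈ ℤ[z_1,z_2,z_3,h_1,h_2,h_3], bihomogeneous of degree 6 in (z_1,z_2,z_3) and degree 3 in (h_1,h_2,h_3), such that identically (s_1 s_4 − s_2 s_3)²(s_0 s_2 − s_1²) − (s_0 s_4 − s_2²)(s_1 s_3 − s_2²)² = h_1 h_2 h_3 (z_1−z_2)²(z_2−z_3)²(z_3−z_1)²·F(z_1,z_2,z_3;h_1,h_2,h_3). -/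
open Finset

/-- The power sum `s_j = h_1 z_1^j + h_2 z_2^j + h_3 z_3^j`, as a polynomial in the six
variables `z_1, z_2, z_3` (encoded as `Sum.inl`) and `h_1, h_2, h_3` (encoded as
`Sum.inr`). -/
noncomputable def powerSum (j : ℕ) : MvPolynomial (Fin 3 ⊕ Fin 3) ℤ :=
  ∑ i : Fin 3, MvPolynomial.X (Sum.inr i) * MvPolynomial.X (Sum.inl i) ^ j

/-!
Let `H = (s_{i+j})`, `0 ≤ i, j ≤ 2`, and let `B` be the adjugate of `H`. The left-hand side is
`B₀₁² B₂₂ - B₁₁ B₀₂²`. Jacobi's identities `B₀₀ B₁₁ - B₀₁² = s₄ det H` and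
`B₀₀ B₂₂ - B₀₂² = s₂ det H` turn it into `(s₂ B₁₁ - s₄ B₂₂) det H = (s₁² s₄ - s₂³) det H`.
The factorization `H = Vᵀ diag(h) V`, with `V` the Vandermonde matrix of `z`, shows that `det H` is
`h₁ h₂ h₃` times the discriminant, so `F = s₁² s₄ - s₂³`.
-/

section Adjugate

open Matrix

variable {R : Type*} [CommRing R] {i j k : Fin 3}

theorem adjugate_mul_adjugate_sub_mul_fin_three (A : Matrix (Fin 3) (Fin 3) R)
    (hij : i ≠ j) (hik : i ≠ k) (hjk : j ≠ k) :
    A.adjugate i i * A.adjugate j j - A.adjugate i j * A.adjugate j i = A.det * A k k := by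
  have adjugate_adjugate_apply : A.adjugate.adjugate k k = A.det * A k k := by
    simp [adjugate_adjugate']
  rw [← adjugate_adjugate_apply, adjugate_fin_three A.adjugate]
  fin_cases i <;> fin_cases j <;> fin_cases k <;> first | contradiction | (simp <;> ring)

theorem adjugate_sq_mul_sub_mul_adjugate_sq_of_isSymm {A : Matrix (Fin 3) (Fin 3) R}
    (hA : A.IsSymm) (hij : i ≠ j) (hik : i ≠ k) (hjk : j ≠ k) :
    A.adjugate i j ^ 2 * A.adjugate k k - A.adjugate j j * A.adjugate i k ^ 2 =
      A.det * (A j j * A.adjugate j j - A k k * A.adjugate k k) := by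
  have jacobi_k := adjugate_mul_adjugate_sub_mul_fin_three A hij hik hjk
  have jacobi_j := adjugate_mul_adjugate_sub_mul_fin_three A hik hij hjk.symm
  rw [hA.adjugate.apply i j] at jacobi_k
  rw [hA.adjugate.apply i k] at jacobi_j
  linear_combination A.adjugate j j * jacobi_j - A.adjugate k k * jacobi_k

end Adjugate

section Hankel

open Matrix

variable {R : Type*}

/-- The `n × n` Hankel matrix of a sequence `s`, with rows and columns indexed from `0`. -/
def hankelMatrix (n : ℕ) (s : ℕ → R) : Matrix (Fin n) (Fin n) R :=
  of fun i j => s (i + j)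

theorem hankelMatrix_apply {n : ℕ} (s : ℕ → R) (i j : Fin n) :
    hankelMatrix n s i j = s (i + j) :=
  rfl

theorem hankelMatrix_isSymm (n : ℕ) (s : ℕ → R) : (hankelMatrix n s).IsSymm :=
  IsSymm.ext fun i j => congrArg s (Nat.add_comm j i)

variable [CommRing R]

theorem hankelMatrix_sum_mul_pow {n : ℕ} (h z : Fin n → R) :
    hankelMatrix n (fun m => ∑ k, h k * z k ^ m) =
      (vandermonde z)ᵀ * diagonal h * vandermonde z := by
  ext i j
  rw [mul_apply]
  simp only [hankelMatrix_apply, mul_diagonal, transpose_apply, vandermonde_apply]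
  exact sum_congr rfl fun k _ => by ring

theorem det_hankelMatrix_sum_mul_pow {n : ℕ} (h z : Fin n → R) :
    (hankelMatrix n fun m => ∑ k, h k * z k ^ m).det =
      (∏ k, h k) * (∏ i, ∏ j ∈ Ioi i, (z j - z i)) ^ 2 := by
  rw [hankelMatrix_sum_mul_pow, det_mul, det_mul, det_transpose, det_diagonal, det_vandermonde]
  ring

theorem prod_prod_Ioi_sub_fin_three (z : Fin 3 → R) :
    ∏ i, ∏ j ∈ Ioi i, (z j - z i) = (z 1 - z 0) * (z 2 - z 0) * (z 2 - z 1) := by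
  have Ioi_zero : Ioi (0 : Fin 3) = {1, 2} := by decide
  have Ioi_one : Ioi (1 : Fin 3) = {2} := by decide
  have Ioi_two : Ioi (2 : Fin 3) = ∅ := by decide
  simp [Fin.prod_univ_three, Ioi_zero, Ioi_one, Ioi_two]

theorem adjugate_hankelMatrix_three (s : ℕ → R) :
    (hankelMatrix 3 s).adjugate =
      !![s 2 * s 4 - s 3 ^ 2, s 2 * s 3 - s 1 * s 4, s 1 * s 3 - s 2 ^ 2;
        s 2 * s 3 - s 1 * s 4, s 0 * s 4 - s 2 ^ 2, s 1 * s 2 - s 0 * s 3;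
        s 1 * s 3 - s 2 ^ 2, s 1 * s 2 - s 0 * s 3, s 0 * s 2 - s 1 ^ 2] := by
  rw [adjugate_fin_three]
  ext i j
  fin_cases i <;> fin_cases j <;> simp [hankelMatrix_apply] <;> ring

theorem minor_sq_mul_sub_eq_det_hankelMatrix_three_mul (s : ℕ → R) :
    (s 1 * s 4 - s 2 * s 3) ^ 2 * (s 0 * s 2 - s 1 ^ 2) -
        (s 0 * s 4 - s 2 ^ 2) * (s 1 * s 3 - s 2 ^ 2) ^ 2 =
      (hankelMatrix 3 s).det * (s 1 ^ 2 * s 4 - s 2 ^ 3) := by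
  let H := hankelMatrix 3 s
  calc
    _ = H.adjugate 0 1 ^ 2 * H.adjugate 2 2 - H.adjugate 1 1 * H.adjugate 0 2 ^ 2 := by
      simp only [H, adjugate_hankelMatrix_three, of_apply, Matrix.cons_val]
      ring
    _ = H.det * (H 1 1 * H.adjugate 1 1 - H 2 2 * H.adjugate 2 2) :=
      adjugate_sq_mul_sub_mul_adjugate_sq_of_isSymm (hankelMatrix_isSymm 3 s)
        (by decide) (by decide) (by decide)
    _ = H.det * (s 2 * (s 0 * s 4 - s 2 ^ 2) - s 4 * (s 0 * s 2 - s 1 ^ 2)) := by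
      simp [H, adjugate_hankelMatrix_three, hankelMatrix_apply]
    _ = H.det * (s 1 ^ 2 * s 4 - s 2 ^ 3) := by ring

end Hankel

section PowerSum

open MvPolynomial

theorem det_hankelMatrix_powerSum :
    (hankelMatrix 3 powerSum).det =
      X (Sum.inr 0) * X (Sum.inr 1) * X (Sum.inr 2) *
        (X (Sum.inl 0) - X (Sum.inl 1)) ^ 2 *
        (X (Sum.inl 1) - X (Sum.inl 2)) ^ 2 *
        (X (Sum.inl 2) - X (Sum.inl 0)) ^ 2 := by
  unfold powerSum
  rw [det_hankelMatrix_sum_mul_pow, prod_prod_Ioi_sub_fin_three, Fin.prod_univ_three]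
  ring

variable {M : Type*} [AddCommMonoid M]

theorem isWeightedHomogeneous_powerSum (a b : M) (j : ℕ) :
    IsWeightedHomogeneous (Sum.elim (fun _ => a) (fun _ => b)) (powerSum j) (j • a + b) := by
  refine IsWeightedHomogeneous.sum _ _ _ fun i _ => ?_
  rw [add_comm]
  exact (isWeightedHomogeneous_X ℤ _ (Sum.inr i)).mul
    ((isWeightedHomogeneous_X ℤ _ (Sum.inl i)).pow j)

theorem isWeightedHomogeneous_powerSum_sq_mul_sub_cube (a b : M) :
    IsWeightedHomogeneous (Sum.elim (fun _ => a) (fun _ => b))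
      (powerSum 1 ^ 2 * powerSum 4 - powerSum 2 ^ 3) (6 • a + 3 • b) := by
  have left_degree : 2 • (1 • a + b) + (4 • a + b) = 6 • a + 3 • b := by abel
  have right_degree : 3 • (2 • a + b) = 6 • a + 3 • b := by abel
  have left_homogeneous := ((isWeightedHomogeneous_powerSum a b 1).pow 2).mul
    (isWeightedHomogeneous_powerSum a b 4)
  have right_homogeneous := (isWeightedHomogeneous_powerSum a b 2).pow 3
  rw [left_degree] at left_homogeneous
  rw [right_degree] at right_homogeneous
  exact left_homogeneous.sub right_homogeneous

end PowerSum

theorem degree_three_polynomial_identity :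
    ∃ F : MvPolynomial (Fin 3 ⊕ Fin 3) ℤ,
      MvPolynomial.IsWeightedHomogeneous
        (Sum.elim (fun _ : Fin 3 => (1 : ℕ)) (fun _ : Fin 3 => 0)) F 6 ∧
      MvPolynomial.IsWeightedHomogeneous
        (Sum.elim (fun _ : Fin 3 => (0 : ℕ)) (fun _ : Fin 3 => 1)) F 3 ∧
      (powerSum 1 * powerSum 4 - powerSum 2 * powerSum 3) ^ 2 *
          (powerSum 0 * powerSum 2 - powerSum 1 ^ 2) -
        (powerSum 0 * powerSum 4 - powerSum 2 ^ 2) *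
          (powerSum 1 * powerSum 3 - powerSum 2 ^ 2) ^ 2 =
      MvPolynomial.X (Sum.inr 0) * MvPolynomial.X (Sum.inr 1) * MvPolynomial.X (Sum.inr 2) *
        (MvPolynomial.X (Sum.inl 0) - MvPolynomial.X (Sum.inl 1)) ^ 2 *
        (MvPolynomial.X (Sum.inl 1) - MvPolynomial.X (Sum.inl 2)) ^ 2 *
        (MvPolynomial.X (Sum.inl 2) - MvPolynomial.X (Sum.inl 0)) ^ 2 * F := by
  refine ⟨powerSum 1 ^ 2 * powerSum 4 - powerSum 2 ^ 3,
    isWeightedHomogeneous_powerSum_sq_mul_sub_cube 1 0,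
    isWeightedHomogeneous_powerSum_sq_mul_sub_cube 0 1, ?_⟩
  rw [minor_sq_mul_sub_eq_det_hankelMatrix_three_mul powerSum, det_hankelMatrix_powerSum]
end

section
/- Let k > r ≥ 1 and κ ≥ 1 be integers, let s be a positive integer, and let X ≥ 1 be real. Let U_2 denote the number of integral solutions of the combined system ∑_{i=1}^{r(r−1)/2}(x_i^j − y_i^j) = binom(j,r)·∑_{l=1}^{2κ} h_l z_l^{j−r} for r ≤ j ≤ k, together with ∑_{i=1}^{r(r−1)/2}(x_i^j − y_i^j) = 0 for 1 ≤ j < r, subject to 1 ≤ x_i, y_i ≤ 2X, 1 ≤ z_l ≤ X and |h_l| ≤ sX^r. Let J denote the number of integral solutions of ∑_{i=1}^{r(r−1)/2}(x_i^j − y_i^j) = 0 (1 ≤ j ≤ r−1) with 1 ≤ x_i, y_i ≤ 2X, and let A denote the number of integral solutions of ∑_{l=1}^{2κ} h_l z_l^{j−r} = 0 (r ≤ j ≤ k) with |h_l| ≤ sX^r and 1 ≤ z_l ≤ X. Then U_2 ≤ J·A. -/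
open Finset

/-!
Fixing `x, y` and comparing two solutions of the combined system (the binomial coefficients are
nonzero) confines the remaining variables to the solutions of
`∑ l, h l * z l ^ (j - r) = n j` for a single vector `n`, so it suffices that `n = 0` maximises the
number of these. Split the even number of variables into halves with moment vectors `a` and `b`:
by Cauchy–Schwarz `a = n - b` has at most as many solutions as `a = b`, and the symmetry
`h ↦ -h` turns the latter into `a + b = 0`.
-/

section CauchySchwarz

variable {α β γ : Type*} [DecidableEq γ]

lemma card_filter_eq_eq_sum_card_mul_card (S : Finset α) (T : Finset β) (f : α → γ) (g : β → γ)
    {C : Finset γ} (hC : ∀ a ∈ S, f a ∈ C) :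
    #{p ∈ S ×ˢ T | f p.1 = g p.2} = ∑ c ∈ C, #{a ∈ S | f a = c} * #{b ∈ T | g b = c} := by
  rw [card_eq_sum_card_fiberwise (f := fun p ↦ f p.1) (t := C)
    fun p hp ↦ hC _ (mem_product.1 (mem_filter.1 hp).1).1]
  refine sum_congr rfl fun c _ ↦ ?_
  rw [← card_product]
  congr 1
  ext p
  grind

lemma sq_card_filter_eq_le_mul (S : Finset α) (T : Finset β) (f : α → γ) (g : β → γ) :
    #{p ∈ S ×ˢ T | f p.1 = g p.2} ^ 2 ≤
      #{p ∈ S ×ˢ S | f p.1 = f p.2} * #{p ∈ T ×ˢ T | g p.1 = g p.2} := by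
  have hS : ∀ a ∈ S, f a ∈ S.image f ∪ T.image g := fun a ha ↦
    mem_union_left _ (mem_image_of_mem f ha)
  have hT : ∀ b ∈ T, g b ∈ S.image f ∪ T.image g := fun b hb ↦
    mem_union_right _ (mem_image_of_mem g hb)
  rw [card_filter_eq_eq_sum_card_mul_card S T f g hS,
    card_filter_eq_eq_sum_card_mul_card S S f f hS,
    card_filter_eq_eq_sum_card_mul_card T T g g hT]
  simpa only [sq] using sum_mul_sq_le_sq_mul_sq _ (fun c ↦ #{a ∈ S | f a = c})
    (fun c ↦ #{b ∈ T | g b = c})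

end CauchySchwarz

section Symmetric

variable {α G : Type*} [DecidableEq G]

lemma card_filter_add_eq_le_card_filter_eq [AddGroup G] (S : Finset α) (f : α → G) (n : G) :
    #{p ∈ S ×ˢ S | f p.1 + f p.2 = n} ≤ #{p ∈ S ×ˢ S | f p.1 = f p.2} := by
  have h := sq_card_filter_eq_le_mul S S f (fun b ↦ n - f b)
  simp only [sub_right_inj, ← sq] at h
  simp only [eq_sub_iff_add_eq] at h
  exact (Nat.pow_le_pow_iff_left two_ne_zero).1 h

lemma card_filter_add_eq_le_card_filter_add_eq_zero [AddGroup G] {S : Finset α} {f : α → G}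
    {ν : α → α} (hνS : ∀ a ∈ S, ν a ∈ S) (hν : Function.Injective ν)
    (hfν : ∀ a, f (ν a) = -f a) (n : G) :
    #{p ∈ S ×ˢ S | f p.1 + f p.2 = n} ≤ #{p ∈ S ×ˢ S | f p.1 + f p.2 = 0} := by
  refine (card_filter_add_eq_le_card_filter_eq S f n).trans <|
    card_le_card_of_injOn (Prod.map id ν) (fun p hp ↦ ?_) (Function.injective_id.prodMap hν).injOn
  simp only [coe_filter, mem_product, Set.mem_ofPred_eq] at hp ⊢
  exact ⟨⟨hp.1.1, hνS _ hp.1.2⟩, by simp [hfν, hp.2]⟩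

variable {ι ι₁ ι₂ β : Type*} [Fintype ι] [DecidableEq ι]
  [Fintype ι₁] [DecidableEq ι₁] [Fintype ι₂] [DecidableEq ι₂]

lemma card_filter_piFinset_sum_eq_of_equiv_sum [AddCommMonoid G] (e : ι ≃ ι₁ ⊕ ι₂) (B : Finset β)
    (φ : β → G) (n : G) :
    #{u ∈ Fintype.piFinset fun _ : ι ↦ B | ∑ l, φ (u l) = n} =
      #{p ∈ (Fintype.piFinset fun _ : ι₁ ↦ B) ×ˢ (Fintype.piFinset fun _ : ι₂ ↦ B) |
        ∑ l, φ (p.1 l) + ∑ l, φ (p.2 l) = n} := by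
  refine card_equiv ((e.arrowCongr (.refl β)).trans (.sumArrowEquivProdArrow ι₁ ι₂ β)) fun u ↦ ?_
  have hmem : (∀ l, u l ∈ B) ↔ ∀ l, u (e.symm l) ∈ B := (e.symm.forall_congr_right).symm
  have hsum : ∑ l, φ (u l) = ∑ l, φ (u (e.symm l)) := (e.symm.sum_comp fun l ↦ φ (u l)).symm
  simp [hmem, hsum, Equiv.sumArrowEquivProdArrow]

lemma card_filter_piFinset_sum_eq_le_sum_eq_zero [AddCommGroup G] (hι : Even (Fintype.card ι))
    {B : Finset β} {φ : β → G} {ν : β → β} (hνB : ∀ b ∈ B, ν b ∈ B)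
    (hν : Function.Injective ν) (hφν : ∀ b, φ (ν b) = -φ b) (n : G) :
    #{u ∈ Fintype.piFinset fun _ : ι ↦ B | ∑ l, φ (u l) = n} ≤
      #{u ∈ Fintype.piFinset fun _ : ι ↦ B | ∑ l, φ (u l) = 0} := by
  obtain ⟨m, hm⟩ := hι
  let e : ι ≃ Fin m ⊕ Fin m := Fintype.equivOfCardEq (by simp [hm])
  rw [card_filter_piFinset_sum_eq_of_equiv_sum e, card_filter_piFinset_sum_eq_of_equiv_sum e]
  refine card_filter_add_eq_le_card_filter_add_eq_zero (f := fun a : Fin m → β ↦ ∑ l, φ (a l))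
    (ν := fun a ↦ ν ∘ a) (fun a ha ↦ ?_) hν.comp_left (fun a ↦ ?_) n
  · simpa using fun l ↦ hνB _ (Fintype.mem_piFinset.1 ha l)
  · simp [hφν]

end Symmetric

lemma ncard_le_ncard_image_fst_mul {α β : Type*} {s : Set (α × β)} {M : ℕ}
    (hM : ∀ q ∈ s, {w | (q.1, w) ∈ s}.ncard ≤ M) : s.ncard ≤ (Prod.fst '' s).ncard * M := by
  classical
  obtain hs | hs := s.infinite_or_finite
  · simp [hs.ncard]
  lift s to Finset (α × β) using hs
  rw [← coe_image, Set.ncard_coe_finset, Set.ncard_coe_finset, mul_comm]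
  refine card_le_mul_card_image s M (forall_mem_image.2 fun q hq ↦ ?_)
  have hfiber : (↑{q' ∈ s | q'.1 = q.1} : Set (α × β)) = Prod.mk q.1 '' {w | (q.1, w) ∈ s} := by
    ext ⟨a, b⟩
    simp only [coe_filter, Set.mem_ofPred_eq, Set.mem_image, Prod.mk.injEq]
    grind
  rw [← Set.ncard_coe_finset, hfiber, Set.ncard_image_of_injective _ (Prod.mk_right_injective _)]
  exact hM q hq

lemma finite_setOf_forall_mem_prod {R : Type*} (ι : Type*) [Finite ι] {S T : Set R}
    (hS : S.Finite) (hT : T.Finite) :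
    {p : (ι → R) × (ι → R) | (∀ i, p.1 i ∈ S) ∧ ∀ i, p.2 i ∈ T}.Finite :=
  (Set.Finite.pi' fun _ ↦ hS).prod (Set.Finite.pi' fun _ ↦ hT)

section Systems

/-- The solutions `w = (h, z)`, with entries of `h` in `𝓗` and of `z` in `𝓩`, of the system
`∑ l, h l * z l ^ (j - r) = n j` for `r ≤ j ≤ k`. The paper's `A` counts the case `n = 0`. -/
def weightedPowerSumSolutions {R : Type*} [Semiring R] (ι : Type*) [Fintype ι] (r k : ℕ)
    (𝓗 𝓩 : Set R) (n : ℕ → R) : Set ((ι → R) × (ι → R)) :=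
  {w | (∀ l, w.1 l ∈ 𝓗) ∧ (∀ l, w.2 l ∈ 𝓩) ∧
    ∀ j ∈ Icc r k, ∑ l, w.1 l * w.2 l ^ (j - r) = n j}

variable {R ι : Type*} [Fintype ι] {𝓗 𝓩 : Set R}

lemma finite_weightedPowerSumSolutions [Semiring R] (h𝓗 : 𝓗.Finite) (h𝓩 : 𝓩.Finite) (r k : ℕ)
    (n : ℕ → R) : (weightedPowerSumSolutions ι r k 𝓗 𝓩 n).Finite :=
  (finite_setOf_forall_mem_prod ι h𝓗 h𝓩).subset fun _ hw ↦ ⟨hw.1, hw.2.1⟩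

lemma ncard_weightedPowerSumSolutions_eq_card_filter [Semiring R] [DecidableEq R]
    [DecidableEq ι] (h𝓗 : 𝓗.Finite) (h𝓩 : 𝓩.Finite) (r k : ℕ) (n : ℕ → R) :
    (weightedPowerSumSolutions ι r k 𝓗 𝓩 n).ncard =
      #{u ∈ Fintype.piFinset fun _ : ι ↦ h𝓗.toFinset ×ˢ h𝓩.toFinset |
        ∑ l, (fun j : Icc r k ↦ (u l).1 * (u l).2 ^ (j - r : ℕ)) = fun j : Icc r k ↦ n j} := by
  rw [← Set.ncard_coe_finset,
    ← Set.ncard_image_of_injective _ (Equiv.arrowProdEquivProdArrow ι _ _).injective,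
    Equiv.image_eq_preimage_symm]
  congr 1
  ext w
  simp [weightedPowerSumSolutions, funext_iff, forall_and, and_assoc]

lemma ncard_weightedPowerSumSolutions_le_ncard_zero [Ring R] (hι : Even (Fintype.card ι))
    (h𝓗 : 𝓗.Finite) (h𝓗_neg : ∀ h ∈ 𝓗, -h ∈ 𝓗) (h𝓩 : 𝓩.Finite) (r k : ℕ) (n : ℕ → R) :
    (weightedPowerSumSolutions ι r k 𝓗 𝓩 n).ncard ≤
      (weightedPowerSumSolutions ι r k 𝓗 𝓩 0).ncard := by
  classical
  rw [ncard_weightedPowerSumSolutions_eq_card_filter h𝓗 h𝓩,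
    ncard_weightedPowerSumSolutions_eq_card_filter h𝓗 h𝓩]
  refine card_filter_piFinset_sum_eq_le_sum_eq_zero (B := h𝓗.toFinset ×ˢ h𝓩.toFinset)
    (φ := fun b (j : Icc r k) ↦ b.1 * b.2 ^ (j - r : ℕ)) (ν := Prod.map Neg.neg id) hι
    (fun b hb ↦ ?_) (neg_injective.prodMap Function.injective_id) (fun b ↦ ?_) fun j ↦ n j
  · simp only [mem_product, Set.Finite.mem_toFinset] at hb ⊢
    exact ⟨h𝓗_neg _ hb.1, hb.2⟩
  · ext j
    simp

theorem U2_le_J_mul_A_general [Ring R] [NoZeroDivisors R] [CharZero R] {τ : Type*} [Fintype τ]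
    (hι : Even (Fintype.card ι)) {𝓧 : Set R} (h𝓧 : 𝓧.Finite) (h𝓗 : 𝓗.Finite)
    (h𝓗_neg : ∀ h ∈ 𝓗, -h ∈ 𝓗) (h𝓩 : 𝓩.Finite) (r k : ℕ) :
    {q : ((τ → R) × (τ → R)) × ((ι → R) × (ι → R)) |
        (∀ i, q.1.1 i ∈ 𝓧) ∧ (∀ i, q.1.2 i ∈ 𝓧) ∧
        (∀ l, q.2.1 l ∈ 𝓗) ∧ (∀ l, q.2.2 l ∈ 𝓩) ∧
        (∀ j ∈ Icc r k, ∑ i, (q.1.1 i ^ j - q.1.2 i ^ j) =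
          j.choose r * ∑ l, q.2.1 l * q.2.2 l ^ (j - r)) ∧
        ∀ j ∈ Ico 1 r, ∑ i, (q.1.1 i ^ j - q.1.2 i ^ j) = 0}.ncard ≤
      {p : (τ → R) × (τ → R) |
        (∀ i, p.1 i ∈ 𝓧) ∧ (∀ i, p.2 i ∈ 𝓧) ∧
        ∀ j ∈ Ico 1 r, ∑ i, (p.1 i ^ j - p.2 i ^ j) = 0}.ncard *
      (weightedPowerSumSolutions ι r k 𝓗 𝓩 0).ncard := by
  refine (ncard_le_ncard_image_fst_mul ?_).trans
    (Nat.mul_le_mul_right _ (Set.ncard_le_ncard ?_ ?_))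
  · rintro ⟨p, w₀⟩ ⟨-, -, -, -, hw₀, -⟩
    let n : ℕ → R := fun j ↦ ∑ l, w₀.1 l * w₀.2 l ^ (j - r)
    refine (Set.ncard_le_ncard (t := weightedPowerSumSolutions ι r k 𝓗 𝓩 n) ?_
      (finite_weightedPowerSumSolutions h𝓗 h𝓩 r k n)).trans
      (ncard_weightedPowerSumSolutions_le_ncard_zero hι h𝓗 h𝓗_neg h𝓩 r k n)
    rintro w ⟨-, -, hh, hz, hw, -⟩
    refine ⟨hh, hz, fun j hj ↦ ?_⟩
    have hchoose : (j.choose r : R) ≠ 0 :=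
      Nat.cast_ne_zero.2 (Nat.choose_pos (mem_Icc.1 hj).1).ne'
    exact mul_left_cancel₀ hchoose ((hw j hj).symm.trans (hw₀ j hj))
  · rintro _ ⟨q, ⟨hx, hy, _, _, _, hxy⟩, rfl⟩
    exact ⟨hx, hy, hxy⟩
  · exact (finite_setOf_forall_mem_prod τ h𝓧 h𝓧).subset fun p hp ↦ ⟨hp.1, hp.2.1⟩

end Systems

lemma finite_setOf_one_le_and_cast_le (Y : ℝ) : {x : ℤ | 1 ≤ x ∧ (x : ℝ) ≤ Y}.Finite :=
  (Set.finite_Icc 1 ⌊Y⌋).subset fun _ hx ↦ ⟨hx.1, Int.le_floor.2 hx.2⟩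

lemma finite_setOf_abs_cast_le (Y : ℝ) : {h : ℤ | |(h : ℝ)| ≤ Y}.Finite :=
  (Set.finite_Icc ⌈-Y⌉ ⌊Y⌋).subset fun _ hh ↦
    ⟨Int.ceil_le.2 (abs_le.1 hh).1, Int.le_floor.2 (abs_le.1 hh).2⟩

theorem U2_le_J_mul_A
    (k r κ s : ℕ) (hr : 1 ≤ r) (hrk : r < k) (hκ : 1 ≤ κ) (hs : 1 ≤ s)
    (X : ℝ) (hX : 1 ≤ X) :
    -- U₂: solutions of the combined system
    ({q : ((Fin (r * (r - 1) / 2) → ℤ) × (Fin (r * (r - 1) / 2) → ℤ)) ×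
          ((Fin (2 * κ) → ℤ) × (Fin (2 * κ) → ℤ)) |
        (∀ i, 1 ≤ q.1.1 i ∧ (q.1.1 i : ℝ) ≤ 2 * X) ∧
        (∀ i, 1 ≤ q.1.2 i ∧ (q.1.2 i : ℝ) ≤ 2 * X) ∧
        (∀ l, |(q.2.1 l : ℝ)| ≤ (s : ℝ) * X ^ r) ∧
        (∀ l, 1 ≤ q.2.2 l ∧ (q.2.2 l : ℝ) ≤ X) ∧
        (∀ j ∈ Finset.Icc r k,
          ∑ i, ((q.1.1 i) ^ j - (q.1.2 i) ^ j) =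
            (j.choose r : ℤ) * ∑ l, q.2.1 l * (q.2.2 l) ^ (j - r)) ∧
        (∀ j ∈ Finset.Ico 1 r, ∑ i, ((q.1.1 i) ^ j - (q.1.2 i) ^ j) = 0)}.ncard) ≤
    -- J: solutions of the Vinogradov system of degree r-1
    ({p : (Fin (r * (r - 1) / 2) → ℤ) × (Fin (r * (r - 1) / 2) → ℤ) |
        (∀ i, 1 ≤ p.1 i ∧ (p.1 i : ℝ) ≤ 2 * X) ∧
        (∀ i, 1 ≤ p.2 i ∧ (p.2 i : ℝ) ≤ 2 * X) ∧
        (∀ j ∈ Finset.Ico 1 r, ∑ i, ((p.1 i) ^ j - (p.2 i) ^ j) = 0)}.ncard) *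
    -- A: solutions of the auxiliary system
    ({w : (Fin (2 * κ) → ℤ) × (Fin (2 * κ) → ℤ) |
        (∀ l, |(w.1 l : ℝ)| ≤ (s : ℝ) * X ^ r) ∧
        (∀ l, 1 ≤ w.2 l ∧ (w.2 l : ℝ) ≤ X) ∧
        (∀ j ∈ Finset.Icc r k, ∑ l, w.1 l * (w.2 l) ^ (j - r) = 0)}.ncard) := by
  exact U2_le_J_mul_A_general (by simp) (finite_setOf_one_le_and_cast_le (2 * X))
    (finite_setOf_abs_cast_le (s * X ^ r)) (fun h hh ↦ by simpa using hh)
    (finite_setOf_one_le_and_cast_le X) r k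
end
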